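/- arXiv:2307.07596 — 3 statements merged into one kernel-verified Lean document; each statement's English description precedes it below -/
import Mathlib

section
/- Let T > 0 and let φ : [0,T] → [0,∞) be a continuous function. Let α, β ≥ 0 be constants. If for all t ∈ [0,T] one has φ(t) ≤ α + β (∫₀ᵗ φ(s)² ds)^{1/2}, then for all t ∈ [0,T] one has φ(t) ≤ α (1 + β² t)^{1/2} · exp(1/2 + (1/2) β² t). -/
open MeasureTheory

/-!
Cauchy–Schwarz with a weight `τ > 0` bounds `(α + β √I)²` by `(1 + β² τ) (α² + I / τ)`. The square
of `φ` therefore satisfies a linear Grönwall inequality with rate `(1 + β² τ) / τ`. Choosing the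
weight `τ` to be the time at which the bound is evaluated makes the exponent `1 + β² τ`; take square
roots.
-/

open Set Real

theorem le_mul_exp_of_le_add_mul_integral_of_continuousOn {f : ℝ → ℝ} {a b C K : ℝ} (hK : 0 ≤ K)
    (hf : ContinuousOn f (Icc a b)) (h : ∀ t ∈ Icc a b, f t ≤ C + K * ∫ s in a..t, f s) :
    ∀ t ∈ Icc a b, f t ≤ C * exp (K * (t - a)) := by
  intro t ht
  set F : ℝ → ℝ := fun x ↦ C + K * ∫ s in a..x, f s
  have hderiv : ∀ x ∈ Icc a b, HasDerivWithinAt F (K * f x) (Icc a b) x := by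
    intro x hx
    have : Fact (x ∈ Icc a b) := ⟨hx⟩
    have hint : IntervalIntegrable f volume a x :=
      (hf.mono (Icc_subset_Icc_right hx.2)).intervalIntegrable_of_Icc hx.1
    have hprim : HasDerivWithinAt (fun y ↦ ∫ s in a..y, f s) (f x) (Icc a b) x :=
      intervalIntegral.integral_hasDerivWithinAt_right hint
        (hf.stronglyMeasurableAtFilter_nhdsWithin measurableSet_Icc x) (hf x hx)
    exact (hprim.const_mul K).const_add C
  have hF : F t ≤ gronwallBound C K 0 (t - a) := by
    refine le_gronwallBound_of_liminf_deriv_right_le (f' := fun x ↦ K * f x)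
      (fun x hx ↦ (hderiv x hx).continuousWithinAt) (fun x hx r hr ↦ ?_) (by simp [F])
      (fun x hx ↦ ?_) t ht
    · exact ((hderiv x (Ico_subset_Icc_self hx)).mono_of_mem_nhdsWithin
        (Icc_mem_nhdsGE_of_mem hx)).liminf_right_slope_le hr
    · simpa using mul_le_mul_of_nonneg_left (h x (Ico_subset_Icc_self hx)) hK
  rw [gronwallBound_ε0] at hF
  exact (h t ht).trans hF

theorem le_mul_exp_of_le_add_mul_integral {f : ℝ → ℝ} {a b C K : ℝ} (hK : 0 ≤ K)
    (hf : IntervalIntegrable f volume a b)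
    (h : ∀ t ∈ Icc a b, f t ≤ C + K * ∫ s in a..t, f s) :
    ∀ t ∈ Icc a b, f t ≤ C * exp (K * (t - a)) := by
  intro t ht
  have hab : a ≤ b := ht.1.trans ht.2
  -- The right-hand side of `h` is continuous and satisfies the same inequality as `f`.
  set F : ℝ → ℝ := fun x ↦ C + K * ∫ s in a..x, f s
  have hF : ContinuousOn F (Icc a b) := by
    have := intervalIntegral.continuousOn_primitive_interval' hf left_mem_uIcc
    rw [uIcc_of_le hab] at this
    exact (this.const_mul K).const_add C
  refine (h t ht).trans (le_mul_exp_of_le_add_mul_integral_of_continuousOn hK hF ?_ t ht)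
  intro x hx
  have hfF : ∫ s in a..x, f s ≤ ∫ s in a..x, F s := by
    refine intervalIntegral.integral_mono_on hx.1 (hf.mono_set ?_)
      ((hF.mono (Icc_subset_Icc_right hx.2)).intervalIntegrable_of_Icc hx.1)
      fun s hs ↦ h s ⟨hs.1, hs.2.trans hx.2⟩
    rw [uIcc_of_le hx.1, uIcc_of_le hab]
    exact Icc_subset_Icc_right hx.2
  exact add_le_add le_rfl (mul_le_mul_of_nonneg_left hfF hK)

theorem add_mul_sq_le {𝕜 : Type*} [Field 𝕜] [LinearOrder 𝕜] [IsStrictOrderedRing 𝕜]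
    (x y u : 𝕜) {τ : 𝕜} (hτ : 0 < τ) :
    (x + y * u) ^ 2 ≤ (1 + y ^ 2 * τ) * (x ^ 2 + u ^ 2 / τ) := by
  rw [← sub_nonneg]
  calc 0 ≤ (x * y * τ - u) ^ 2 / τ := by positivity
    _ = (1 + y ^ 2 * τ) * (x ^ 2 + u ^ 2 / τ) - (x + y * u) ^ 2 := by field_simp; ring

theorem sq_le_mul_exp_of_le_add_mul_sqrt_integral_sq {φ : ℝ → ℝ} {a b α β τ : ℝ} (hτ : 0 < τ)
    (hint : IntervalIntegrable (fun s ↦ φ s ^ 2) volume a b) (hnonneg : ∀ t ∈ Icc a b, 0 ≤ φ t)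
    (h : ∀ t ∈ Icc a b, φ t ≤ α + β * √(∫ s in a..t, φ s ^ 2)) :
    ∀ t ∈ Icc a b,
      φ t ^ 2 ≤ (1 + β ^ 2 * τ) * α ^ 2 * exp ((1 + β ^ 2 * τ) / τ * (t - a)) := by
  refine le_mul_exp_of_le_add_mul_integral (by positivity) hint fun t ht ↦ ?_
  have hI : 0 ≤ ∫ s in a..t, φ s ^ 2 :=
    intervalIntegral.integral_nonneg ht.1 fun s _ ↦ sq_nonneg (φ s)
  calc φ t ^ 2 ≤ (α + β * √(∫ s in a..t, φ s ^ 2)) ^ 2 :=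
        pow_le_pow_left₀ (hnonneg t ht) (h t ht) 2
    _ ≤ (1 + β ^ 2 * τ) * (α ^ 2 + √(∫ s in a..t, φ s ^ 2) ^ 2 / τ) :=
        add_mul_sq_le _ _ _ hτ
    _ = (1 + β ^ 2 * τ) * α ^ 2 + (1 + β ^ 2 * τ) / τ * ∫ s in a..t, φ s ^ 2 := by
        rw [sq_sqrt hI]; ring

theorem continuous_gronwall_sqrt_general {φ : ℝ → ℝ} {a b α β : ℝ}
    (hint : IntervalIntegrable (fun s ↦ φ s ^ 2) volume a b) (hnonneg : ∀ t ∈ Icc a b, 0 ≤ φ t)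
    (h : ∀ t ∈ Icc a b, φ t ≤ α + β * √(∫ s in a..t, φ s ^ 2)) :
    ∀ t ∈ Icc a b, φ t ≤ α * √(1 + β ^ 2 * (t - a)) * exp (1 / 2 + β ^ 2 * (t - a) / 2) := by
  intro t ht
  have ha : a ∈ Icc a b := left_mem_Icc.2 (ht.1.trans ht.2)
  have hφa : φ a ≤ α := by simpa using h a ha
  have hα : 0 ≤ α := (hnonneg a ha).trans hφa
  rcases ht.1.eq_or_lt with rfl | hat
  · simpa using hφa.trans (le_mul_of_one_le_right hα (one_le_exp (by norm_num : (0 : ℝ) ≤ 2⁻¹)))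
  have hτ : 0 < t - a := sub_pos.2 hat
  refine le_of_sq_le_sq ?_ (by positivity)
  calc φ t ^ 2
      ≤ (1 + β ^ 2 * (t - a)) * α ^ 2 * exp ((1 + β ^ 2 * (t - a)) / (t - a) * (t - a)) :=
        sq_le_mul_exp_of_le_add_mul_sqrt_integral_sq hτ hint hnonneg h t ht
    _ = (α * √(1 + β ^ 2 * (t - a)) * exp (1 / 2 + β ^ 2 * (t - a) / 2)) ^ 2 := by
        rw [div_mul_cancel₀ _ hτ.ne', mul_pow, mul_pow, sq_sqrt (by positivity), ← exp_nat_mul]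
        ring_nf

/-- Continuous Gronwall-type lemma with square root of the integral of the square. -/
theorem continuous_gronwall_sqrt
    (T : ℝ) (hT : 0 < T) (φ : ℝ → ℝ)
    (hcont : ContinuousOn φ (Set.Icc 0 T))
    (hnonneg : ∀ t ∈ Set.Icc (0:ℝ) T, 0 ≤ φ t)
    (α β : ℝ) (hα : 0 ≤ α) (hβ : 0 ≤ β)
    (h : ∀ t ∈ Set.Icc (0:ℝ) T,
      φ t ≤ α + β * Real.sqrt (∫ s in (0:ℝ)..t, (φ s)^2)) :
    ∀ t ∈ Set.Icc (0:ℝ) T,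
      φ t ≤ α * Real.sqrt (1 + β^2 * t) * Real.exp (1/2 + β^2 * t / 2) := by
  simpa only [sub_zero] using continuous_gronwall_sqrt_general
    ((hcont.pow 2).intervalIntegrable_of_Icc hT.le) hnonneg h
end

section
/- Let (φ_j)_{j≥0} be a sequence of nonnegative real numbers and let α, β ≥ 0 be constants. If for every j ≥ 0 one has φ_j ≤ α + β (∑_{i=0}^{j−1} φ_i²)^{1/2}, then for every j ≥ 0 one has φ_j ≤ α (1 + β² j)^{1/2} · exp(1/2 + (1/2) β² j). -/
/-!
By the weighted Young inequality, `(α + s) ^ 2 ≤ (1 + t) * α ^ 2 + (1 + t⁻¹) * s ^ 2` for every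
`t > 0`, so the hypothesis turns into a linear Grönwall inequality for `φ ^ 2`. For weights `w` of
total mass `W` up to time `j`, the resulting bound `(1 + t) * α ^ 2 * exp ((1 + t⁻¹) * W)` at the
choice `t = W` is `(1 + W) * α ^ 2 * exp (1 + W)`.
-/

open Finset Real

theorem add_sq_le_one_add_mul_sq_add {K : Type*} [Field K] [LinearOrder K] [IsStrictOrderedRing K]
    {t : K} (ht : 0 < t) (a b : K) :
    (a + b) ^ 2 ≤ (1 + t) * a ^ 2 + (1 + t⁻¹) * b ^ 2 := by
  linarith [two_mul_le_add_mul_sq (a := a) (b := b) ht]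

theorem le_mul_exp_sum_of_le_add_sum {u c : ℕ → ℝ} {A : ℝ} (hA : 0 ≤ A) (hc : ∀ n, 0 ≤ c n)
    (hu : ∀ n, u n ≤ A + ∑ i ∈ range n, c i * u i) (n : ℕ) :
    u n ≤ A * exp (∑ i ∈ range n, c i) := by
  let U : ℕ → ℝ := fun n ↦ A + ∑ i ∈ range n, c i * u i
  have U_succ_le (n : ℕ) : U (n + 1) ≤ (1 + c n) * U n + 0 := by
    calc U (n + 1) = U n + c n * u n := by simp only [U, sum_range_succ, add_assoc]
      _ ≤ U n + c n * U n := by gcongr; exacts [hc n, hu n]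
      _ = (1 + c n) * U n + 0 := by ring
  have U_le_mul_exp : U n ≤ A * exp (∑ i ∈ range n, c i) := by
    simpa [U] using discrete_gronwall (n₀ := 0) (u := U) (by simpa [U] using hA)
      (fun n _ ↦ U_succ_le n) (fun n _ ↦ hc n) (fun _ _ ↦ le_rfl) n.zero_le
  exact (hu n).trans U_le_mul_exp

theorem sq_le_mul_exp_of_le_add_sqrt_sum {φ w : ℕ → ℝ} {α t : ℝ} (ht : 0 < t)
    (hφ : ∀ j, 0 ≤ φ j) (hw : ∀ j, 0 ≤ w j)
    (h : ∀ j, φ j ≤ α + √(∑ i ∈ range j, w i * φ i ^ 2)) (j : ℕ) :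
    φ j ^ 2 ≤ (1 + t) * α ^ 2 * exp ((1 + t⁻¹) * ∑ i ∈ range j, w i) := by
  have sq_le (n : ℕ) :
      φ n ^ 2 ≤ (1 + t) * α ^ 2 + ∑ i ∈ range n, (1 + t⁻¹) * w i * φ i ^ 2 := by
    have weighted_sum_nonneg : 0 ≤ ∑ i ∈ range n, w i * φ i ^ 2 :=
      sum_nonneg fun i _ ↦ mul_nonneg (hw i) (sq_nonneg _)
    calc φ n ^ 2 ≤ (α + √(∑ i ∈ range n, w i * φ i ^ 2)) ^ 2 := pow_le_pow_left₀ (hφ n) (h n) 2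
      _ ≤ (1 + t) * α ^ 2 + (1 + t⁻¹) * √(∑ i ∈ range n, w i * φ i ^ 2) ^ 2 :=
        add_sq_le_one_add_mul_sq_add ht _ _
      _ = (1 + t) * α ^ 2 + ∑ i ∈ range n, (1 + t⁻¹) * w i * φ i ^ 2 := by
        simp only [sq_sqrt weighted_sum_nonneg, mul_sum, mul_assoc]
  rw [mul_sum]
  exact le_mul_exp_sum_of_le_add_sum (u := fun n ↦ φ n ^ 2) (by positivity)
    (fun n ↦ mul_nonneg (by positivity) (hw n)) sq_le j

theorem discrete_gronwall_sqrt_general {φ w : ℕ → ℝ} {α : ℝ}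
    (hφ : ∀ j, 0 ≤ φ j) (hw : ∀ j, 0 ≤ w j)
    (h : ∀ j, φ j ≤ α + √(∑ i ∈ range j, w i * φ i ^ 2)) (j : ℕ) :
    φ j ≤ α * √(1 + ∑ i ∈ range j, w i) * exp ((1 + ∑ i ∈ range j, w i) / 2) := by
  have hα : 0 ≤ α := (hφ 0).trans (by simpa using h 0)
  have sq_le {t : ℝ} (ht : 0 < t) := sq_le_mul_exp_of_le_add_sqrt_sum ht hφ hw h j
  have hW : 0 ≤ ∑ i ∈ range j, w i := sum_nonneg fun i _ ↦ hw i
  generalize ∑ i ∈ range j, w i = W at sq_le hW ⊢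
  have sq_le_one_add_mul_exp : φ j ^ 2 ≤ (1 + W) * α ^ 2 * exp (1 + W) := by
    rcases hW.eq_or_lt with rfl | W_pos
    · -- The choice `t = W` is not available here, but `t = 1` will do because `1 + 1 ≤ exp 1`.
      calc φ j ^ 2 ≤ (1 + 1) * α ^ 2 := by simpa using sq_le one_pos
        _ ≤ exp 1 * α ^ 2 := by gcongr; exact add_one_le_exp 1
        _ = (1 + 0) * α ^ 2 * exp (1 + 0) := by ring_nf
    · have one_add_inv_mul : (1 + W⁻¹) * W = 1 + W := by field_simp; ring
      simpa only [one_add_inv_mul] using sq_le W_pos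
  refine le_of_sq_le_sq ?_ (by positivity)
  calc φ j ^ 2 ≤ (1 + W) * α ^ 2 * exp (1 + W) := sq_le_one_add_mul_exp
    _ = (α * √(1 + W) * exp ((1 + W) / 2)) ^ 2 := by
      rw [mul_pow, mul_pow, sq_sqrt (by positivity), ← exp_nat_mul]
      ring_nf

/-- Discrete Gronwall-type lemma with square root of the sum of squares. -/
theorem discrete_gronwall_sqrt
    (φ : ℕ → ℝ) (hnonneg : ∀ j, 0 ≤ φ j)
    (α β : ℝ) (hα : 0 ≤ α) (hβ : 0 ≤ β)
    (h : ∀ j, φ j ≤ α + β * Real.sqrt (∑ i ∈ Finset.range j, (φ i)^2)) :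
    ∀ j, φ j ≤ α * Real.sqrt (1 + β^2 * j) * Real.exp (1/2 + β^2 * j / 2) := by
  intro j
  simpa [mul_comm, add_div] using discrete_gronwall_sqrt_general hnonneg (fun _ ↦ sq_nonneg β)
    (by simpa [← mul_sum, sqrt_sq hβ, sqrt_mul (sq_nonneg β)] using h) j
end

section
/- Let X be a (2,D)-smooth Banach space for some D ≥ 1, let (Ω, F, P) be a probability space with a finite filtration (F_j)_{j=0}^ℓ, and let 2 ≤ p < ∞. Suppose (M̃_j)_{j=0}^ℓ is an adapted sequence of X-valued random variables, (M_j)_{j=0}^ℓ is an X-valued martingale with respect to (F_j)_{j=0}^ℓ with difference sequence d_j := M_j − M_{j−1} (1 ≤ j ≤ ℓ), and (V_j)_{j=1}^ℓ is a sequence of random contractions on X that is strongly predictable. Assume M̃_0 = M_0 = 0 and M̃_j = V_j M̃_{j−1} + d_j for j = 1, …, ℓ. Then, writing (M̃)* := max_{0≤j≤ℓ} ‖M̃_j‖, d* := max_{1≤j≤ℓ} ‖d_j‖, and s(M) := (∑_{i=1}^ℓ E[‖d_i‖² | F_{i−1}])^{1/2}, one has ‖(M̃)*‖_{L^p(Ω)}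 ≤ 30 p ‖d*‖_{L^p(Ω)} + 40 D √p ‖s(M)‖_{L^p(Ω)}. -/
open MeasureTheory

/-!
The maximum `N*` of the process satisfies a good-`λ` inequality: off the event that `d*` exceeds
`t / (10 p)` or `D √p s(M)` exceeds `3 t / 40`, the probability of `N* > 2 t` is at most
`exp (2 - 31 p / 4)` times that of `N* > t`. This factor and `3 ^ (-p)` add up to at most
`2 ^ (-p)`, so integrating over `t` costs a factor `3`, whence the constants `30 p` and `40 D √p`.

For the good-`λ` inequality, rescale the jumps to norm at most one and bound `exp √(1 + ‖·‖²)`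
along the process. A nonexpansive map fixing the origin does not increase it. Adding a martingale
difference costs a second-order term, which smoothness bounds by the conditional variance, so
discounting by the accumulated conditional variance gives a supermartingale. To gain the
probability of `N* > t`, apply this to a copy of the process that starts at the origin when the
maximum passes `t` and is frozen when it passes `2 t`. Nonexpansiveness keeps the copy within `t`
plus one jump of the original.
-/

/-- `(2, D)`-smoothness of a Banach space: the upper half of a parallelogram inequality, with
constant `D`. Hilbert spaces are the case `D = 1`. -/
def IsTwoSmooth (X : Type*) [NormedAddCommGroup X] (D : ℝ) : Prop :=
  ∀ x y : X, ‖x + y‖ ^ 2 + ‖x - y‖ ^ 2 ≤ 2 * ‖x‖ ^ 2 + 2 * D ^ 2 * ‖y‖ ^ 2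

/-- The Japanese bracket `√(1 + ‖x‖²)`, a regularization of the norm near the origin. Its
exponential is the potential of the supermartingale argument. -/
noncomputable def smoothNorm {X : Type*} [NormedAddCommGroup X] (x : X) : ℝ :=
  √(1 + ‖x‖ ^ 2)

section SmoothNorm

variable {X : Type*} [NormedAddCommGroup X]

lemma sq_smoothNorm (x : X) : smoothNorm x ^ 2 = 1 + ‖x‖ ^ 2 :=
  Real.sq_sqrt (by positivity)

lemma smoothNorm_zero : smoothNorm (0 : X) = 1 := by
  simp [smoothNorm]

lemma one_le_smoothNorm (x : X) : 1 ≤ smoothNorm x :=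
  Real.one_le_sqrt.2 (le_add_of_nonneg_right (by positivity))

lemma norm_le_smoothNorm (x : X) : ‖x‖ ≤ smoothNorm x :=
  Real.le_sqrt_of_sq_le (by linarith)

lemma smoothNorm_le_smoothNorm {x y : X} (h : ‖x‖ ≤ ‖y‖) : smoothNorm x ≤ smoothNorm y := by
  unfold smoothNorm
  gcongr

lemma continuous_smoothNorm : Continuous (smoothNorm : X → ℝ) := by
  unfold smoothNorm
  fun_prop

lemma norm_div_smoothNorm_le_one (x : X) : ‖x‖ / smoothNorm x ≤ 1 :=
  div_le_one_of_le₀ (norm_le_smoothNorm x) (Real.sqrt_nonneg _)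

lemma abs_smoothNorm_sub_le (x y : X) : |smoothNorm x - smoothNorm y| ≤ ‖x - y‖ := by
  -- `smoothNorm x` is the norm of `(1, x)` in the `ℓ²`-sum of `ℝ` and `X`.
  have hbracket (z : X) : smoothNorm z = ‖WithLp.toLp 2 ((1 : ℝ), z)‖ := by
    simp [WithLp.prod_norm_eq_of_L2, smoothNorm]
  rw [hbracket, hbracket]
  refine (abs_norm_sub_norm_le _ _).trans_eq ?_
  simp [WithLp.prod_norm_eq_of_L2]

lemma smoothNorm_le_one_add_norm (x : X) : smoothNorm x ≤ 1 + ‖x‖ := by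
  have h := abs_smoothNorm_sub_le x 0
  rw [smoothNorm_zero, sub_zero] at h
  linarith [le_of_abs_le h]

lemma smoothNorm_tangent_le (x z : X) :
    smoothNorm x + ‖x‖ / smoothNorm x * (‖z‖ - ‖x‖) ≤ smoothNorm z := by
  have hpos : 0 < smoothNorm x := zero_lt_one.trans_le (one_le_smoothNorm x)
  have hcauchy : 1 + ‖x‖ * ‖z‖ ≤ smoothNorm x * smoothNorm z := by
    unfold smoothNorm
    rw [← Real.sqrt_mul (by positivity)]
    exact Real.le_sqrt_of_sq_le (by linarith [sq_nonneg (‖x‖ - ‖z‖)])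
  refine le_of_mul_le_mul_left ?_ hpos
  calc smoothNorm x * (smoothNorm x + ‖x‖ / smoothNorm x * (‖z‖ - ‖x‖))
      = smoothNorm x ^ 2 + ‖x‖ * (‖z‖ - ‖x‖) := by field_simp
    _ = 1 + ‖x‖ * ‖z‖ := by rw [sq_smoothNorm]; ring
    _ ≤ smoothNorm x * smoothNorm z := hcauchy

lemma exp_smoothNorm_tangent_le (x z : X) :
    Real.exp (smoothNorm x) * (1 + ‖x‖ / smoothNorm x * (‖z‖ - ‖x‖)) ≤
      Real.exp (smoothNorm z) := by
  calc Real.exp (smoothNorm x) * (1 + ‖x‖ / smoothNorm x * (‖z‖ - ‖x‖))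
      ≤ Real.exp (smoothNorm x) * Real.exp (smoothNorm z - smoothNorm x) := by
        gcongr
        linarith [smoothNorm_tangent_le x z,
          Real.add_one_le_exp (smoothNorm z - smoothNorm x)]
    _ = Real.exp (smoothNorm z) := by rw [← Real.exp_add, add_sub_cancel]

end SmoothNorm

lemma exp_add_exp_le (a b : ℝ) :
    Real.exp a + Real.exp b ≤ 2 * Real.exp ((a + b) / 2 + (a - b) ^ 2 / 8) := by
  have ha : Real.exp a = Real.exp ((a + b) / 2) * Real.exp ((a - b) / 2) := by
    rw [← Real.exp_add]; ring_nf
  have hb : Real.exp b = Real.exp ((a + b) / 2) * Real.exp (-((a - b) / 2)) := by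
    rw [← Real.exp_add]; ring_nf
  calc Real.exp a + Real.exp b
      = 2 * (Real.exp ((a + b) / 2) * Real.cosh ((a - b) / 2)) := by
        rw [Real.cosh_eq, ha, hb]; ring
    _ ≤ 2 * (Real.exp ((a + b) / 2) * Real.exp (((a - b) / 2) ^ 2 / 2)) := by
        gcongr
        exact Real.cosh_le_exp_half_sq _
    _ = 2 * Real.exp ((a + b) / 2 + (a - b) ^ 2 / 8) := by
        rw [← Real.exp_add]; ring_nf

lemma exp_le_one_add_two_mul {t : ℝ} (h0 : 0 ≤ t) (h1 : t ≤ 1) : Real.exp t ≤ 1 + 2 * t := by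
  have hquad := le_of_abs_le
    (Real.abs_exp_sub_one_sub_id_le (x := t) (by rwa [abs_of_nonneg h0]))
  nlinarith

namespace IsTwoSmooth

variable {X : Type*} [NormedAddCommGroup X] {D : ℝ}

lemma sq_norm_le (hX : IsTwoSmooth X D) (y : X) : ‖y‖ ^ 2 ≤ D ^ 2 * ‖y‖ ^ 2 := by
  have h := hX 0 y
  rw [zero_add, zero_sub, norm_neg, norm_zero] at h
  linarith

lemma smoothNorm_add_add_smoothNorm_sub_le (hX : IsTwoSmooth X D) (x y : X) :
    (smoothNorm (x + y) + smoothNorm (x - y)) / 2 ≤ smoothNorm x + D ^ 2 * ‖y‖ ^ 2 / 2 := by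
  have hpos : 0 ≤ smoothNorm x := zero_le_one.trans (one_le_smoothNorm x)
  refine le_of_sq_le_sq ?_ (by positivity)
  have hcross : D ^ 2 * ‖y‖ ^ 2 ≤ smoothNorm x * (D ^ 2 * ‖y‖ ^ 2) :=
    le_mul_of_one_le_left (by positivity) (one_le_smoothNorm x)
  calc ((smoothNorm (x + y) + smoothNorm (x - y)) / 2) ^ 2
      ≤ (smoothNorm (x + y) ^ 2 + smoothNorm (x - y) ^ 2) / 2 := by
        linarith [sq_nonneg (smoothNorm (x + y) - smoothNorm (x - y))]
    _ ≤ smoothNorm x ^ 2 + D ^ 2 * ‖y‖ ^ 2 := by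
        simp only [sq_smoothNorm]; linarith [hX x y]
    _ ≤ (smoothNorm x + D ^ 2 * ‖y‖ ^ 2 / 2) ^ 2 := by
        linarith [sq_nonneg (D ^ 2 * ‖y‖ ^ 2)]

lemma exp_smoothNorm_add_add_exp_smoothNorm_sub_le (hX : IsTwoSmooth X D) (x y : X) :
    Real.exp (smoothNorm (x + y)) + Real.exp (smoothNorm (x - y)) ≤
      2 * (Real.exp (smoothNorm x) * Real.exp (D ^ 2 * ‖y‖ ^ 2)) := by
  have hmean := hX.smoothNorm_add_add_smoothNorm_sub_le x y
  have hdiff : (smoothNorm (x + y) - smoothNorm (x - y)) ^ 2 ≤ 4 * (D ^ 2 * ‖y‖ ^ 2) := by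
    have hlip := abs_smoothNorm_sub_le (x + y) (x - y)
    rw [add_sub_sub_cancel] at hlip
    calc (smoothNorm (x + y) - smoothNorm (x - y)) ^ 2
        ≤ (2 * ‖y‖) ^ 2 := by
          rw [← sq_abs]
          gcongr
          linarith [norm_add_le y y]
      _ = 4 * ‖y‖ ^ 2 := by ring
      _ ≤ 4 * (D ^ 2 * ‖y‖ ^ 2) := by gcongr; exact hX.sq_norm_le y
  refine (exp_add_exp_le _ _).trans ?_
  rw [← Real.exp_add]
  exact mul_le_mul_of_nonneg_left (Real.exp_le_exp.2 (by linarith)) zero_le_two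

lemma exp_smoothNorm_add_add_exp_smoothNorm_sub_le_of_norm_le_one (hX : IsTwoSmooth X D)
    (x : X) {y : X} (hy : ‖y‖ ≤ 1) :
    Real.exp (smoothNorm (x + y)) + Real.exp (smoothNorm (x - y)) ≤
      2 * (Real.exp (smoothNorm x) * (1 + 2 * (D ^ 2 * ‖y‖ ^ 2))) := by
  rcases le_total (D ^ 2 * ‖y‖ ^ 2) 1 with hDy | hDy
  · refine (hX.exp_smoothNorm_add_add_exp_smoothNorm_sub_le x y).trans ?_
    gcongr
    exact exp_le_one_add_two_mul (by positivity) hDy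
  · have hthree (z : X) (hz : ‖z - x‖ ≤ 1) :
        Real.exp (smoothNorm z) ≤ Real.exp (smoothNorm x) * 3 := by
      calc Real.exp (smoothNorm z) ≤ Real.exp (smoothNorm x + 1) := by
            gcongr
            linarith [le_of_abs_le (abs_smoothNorm_sub_le z x)]
        _ ≤ Real.exp (smoothNorm x) * 3 := by
            rw [Real.exp_add]
            gcongr
            exact Real.exp_one_lt_three.le
    calc Real.exp (smoothNorm (x + y)) + Real.exp (smoothNorm (x - y))
        ≤ Real.exp (smoothNorm x) * 3 + Real.exp (smoothNorm x) * 3 :=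
          add_le_add (hthree _ (by simpa using hy)) (hthree _ (by simpa using hy))
      _ = 2 * (Real.exp (smoothNorm x) * (1 + 2 * 1)) := by ring
      _ ≤ 2 * (Real.exp (smoothNorm x) * (1 + 2 * (D ^ 2 * ‖y‖ ^ 2))) := by gcongr

/-- For a martingale difference `y` the term `‖x‖ - ‖x - y‖` has nonpositive conditional mean, so
only the term quadratic in `y` survives conditioning. -/
lemma exp_smoothNorm_add_truncated_le (hX : IsTwoSmooth X D) (x y : X) :
    (if ‖y‖ ≤ 1 then Real.exp (smoothNorm (x + y)) else 0) ≤
      Real.exp (smoothNorm x) *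
        (1 + 4 * D ^ 2 * ‖y‖ ^ 2 + ‖x‖ / smoothNorm x * (‖x‖ - ‖x - y‖)) := by
  split_ifs with hy
  · linarith [hX.exp_smoothNorm_add_add_exp_smoothNorm_sub_le_of_norm_le_one x hy,
      exp_smoothNorm_tangent_le x (x - y)]
  · refine mul_nonneg (Real.exp_pos _).le ?_
    have hslope : ‖x‖ / smoothNorm x * (‖x - y‖ - ‖x‖) ≤ ‖y‖ := by
      have hslope_nonneg : 0 ≤ ‖x‖ / smoothNorm x :=
        div_nonneg (norm_nonneg x) (Real.sqrt_nonneg _)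
      calc ‖x‖ / smoothNorm x * (‖x - y‖ - ‖x‖) ≤ ‖x‖ / smoothNorm x * ‖y‖ := by
            gcongr
            linarith [norm_sub_le x y]
        _ ≤ ‖y‖ := mul_le_of_le_one_left (norm_nonneg y) (norm_div_smoothNorm_le_one x)
    have hsq : ‖y‖ ≤ ‖y‖ ^ 2 := le_self_pow₀ (not_le.1 hy).le two_ne_zero
    linarith [hX.sq_norm_le y, sq_nonneg ‖y‖]

end IsTwoSmooth

section GoodLambda

variable {Ω : Type*} {m0 : MeasurableSpace Ω} {μ : Measure Ω} {f g : Ω → ℝ} {p : ℝ}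

lemma eLpNorm_ofReal_eq_lintegral (hf : 0 ≤ f) (hp : 0 < p) :
    eLpNorm f (ENNReal.ofReal p) μ = (∫⁻ ω, ENNReal.ofReal (f ω ^ p) ∂μ) ^ (1 / p) := by
  rw [eLpNorm_eq_lintegral_rpow_enorm_toReal (by simpa using hp) ENNReal.ofReal_ne_top,
    ENNReal.toReal_ofReal hp.le]
  congr 2
  ext ω
  rw [Real.enorm_of_nonneg (hf ω), ENNReal.ofReal_rpow_of_nonneg (hf ω) hp.le]

lemma lintegral_ofReal_mul_rpow {c : ℝ} (hc : 0 ≤ c) (hf : 0 ≤ f) (hp : 0 ≤ p) :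
    ∫⁻ ω, ENNReal.ofReal ((c * f ω) ^ p) ∂μ =
      ENNReal.ofReal c ^ p * ∫⁻ ω, ENNReal.ofReal (f ω ^ p) ∂μ := by
  rw [ENNReal.ofReal_rpow_of_nonneg hc hp, ← lintegral_const_mul' _ _ ENNReal.ofReal_ne_top]
  refine lintegral_congr fun ω => ?_
  rw [Real.mul_rpow hc (hf ω), ENNReal.ofReal_mul (by positivity)]

lemma lintegral_rpow_le_of_goodLambda (hf : 0 ≤ f) (hg : 0 ≤ g) (hfm : AEMeasurable f μ)
    (hgm : AEMeasurable g μ) (hp : 0 < p) {a : ℝ} (ha : 0 < a) {ε : ENNReal}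
    (hgood : ∀ t > 0, μ {ω | a * t < f ω} ≤ ε * μ {ω | t < f ω} + μ {ω | t < g ω}) :
    ENNReal.ofReal a⁻¹ ^ p * ∫⁻ ω, ENNReal.ofReal (f ω ^ p) ∂μ ≤
      ε * ∫⁻ ω, ENNReal.ofReal (f ω ^ p) ∂μ + ∫⁻ ω, ENNReal.ofReal (g ω ^ p) ∂μ := by
  have htail (h : Ω → ℝ) :
      Measurable fun t : ℝ => μ {ω | t < h ω} * ENNReal.ofReal (t ^ (p - 1)) := by
    refine .mul (Antitone.measurable fun s t hst => measure_mono fun ω hω => ?_) (by fun_prop)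
    exact lt_of_le_of_lt hst hω
  rw [← lintegral_ofReal_mul_rpow (inv_nonneg.2 ha.le) hf hp.le,
    lintegral_rpow_eq_lintegral_meas_lt_mul μ
      (.of_forall fun ω => mul_nonneg (inv_nonneg.2 ha.le) (hf ω)) (hfm.const_mul _) hp,
    lintegral_rpow_eq_lintegral_meas_lt_mul μ (.of_forall hf) hfm hp,
    lintegral_rpow_eq_lintegral_meas_lt_mul μ (.of_forall hg) hgm hp, mul_left_comm,
    ← mul_add, ← lintegral_const_mul ε (htail f), ← lintegral_add_right _ (htail g)]
  refine mul_le_mul_right (setLIntegral_mono' measurableSet_Ioi fun t ht => ?_) _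
  rw [← mul_assoc, ← add_mul]
  gcongr
  simpa only [lt_inv_mul_iff₀ ha] using hgood t ht

lemma eLpNorm_le_of_goodLambda (hf : 0 ≤ f) (hg : 0 ≤ g) (hfm : AEMeasurable f μ)
    (hgm : AEMeasurable g μ) (hp : 0 < p) {a b : ℝ} (ha : 0 < a) (hb : 0 < b) {ε : ENNReal}
    (hε : ε + ENNReal.ofReal b⁻¹ ^ p ≤ ENNReal.ofReal a⁻¹ ^ p)
    (hfin : eLpNorm f (ENNReal.ofReal p) μ ≠ ⊤)
    (hgood : ∀ t > 0, μ {ω | a * t < f ω} ≤ ε * μ {ω | t < f ω} + μ {ω | t < g ω}) :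
    eLpNorm f (ENNReal.ofReal p) μ ≤ ENNReal.ofReal b * eLpNorm g (ENNReal.ofReal p) μ := by
  rw [eLpNorm_ofReal_eq_lintegral hf hp] at hfin ⊢
  rw [eLpNorm_ofReal_eq_lintegral hg hp]
  set I := ∫⁻ ω, ENNReal.ofReal (f ω ^ p) ∂μ
  set J := ∫⁻ ω, ENNReal.ofReal (g ω ^ p) ∂μ
  have hI : I ≠ ⊤ := fun htop => hfin (by rw [htop, ENNReal.top_rpow_of_pos (by positivity)])
  have hε_top : ε ≠ ⊤ := ne_top_of_le_ne_top (by finiteness) (le_self_add.trans hε)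
  have habsorb : ENNReal.ofReal b⁻¹ ^ p * I ≤ J := by
    refine (ENNReal.add_le_add_iff_left (ENNReal.mul_ne_top hε_top hI)).1 ?_
    calc ε * I + ENNReal.ofReal b⁻¹ ^ p * I = (ε + ENNReal.ofReal b⁻¹ ^ p) * I := by ring
      _ ≤ ENNReal.ofReal a⁻¹ ^ p * I := by gcongr
      _ ≤ ε * I + J := lintegral_rpow_le_of_goodLambda hf hg hfm hgm hp ha hgood
  have hunscale : I ≤ ENNReal.ofReal b ^ p * J := by
    refine le_of_eq_of_le ?_ (mul_le_mul_right habsorb _)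
    rw [← mul_assoc, ← ENNReal.mul_rpow_of_nonneg _ _ hp.le, ← ENNReal.ofReal_mul hb.le,
      mul_inv_cancel₀ hb.ne', ENNReal.ofReal_one, ENNReal.one_rpow, one_mul]
  calc I ^ (1 / p) ≤ (ENNReal.ofReal b ^ p * J) ^ (1 / p) := by gcongr
    _ = ENNReal.ofReal b * J ^ (1 / p) := by
      rw [ENNReal.mul_rpow_of_nonneg _ _ (by positivity), one_div,
        ENNReal.rpow_rpow_inv hp.ne']

lemma exp_add_inv_three_rpow_le (hp : 1 ≤ p) :
    Real.exp (2 - 31 / 4 * p) + (3⁻¹ : ℝ) ^ p ≤ 2⁻¹ ^ p := by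
  have hexp_neg_one : Real.exp (-1) ≤ 2⁻¹ := by
    rw [Real.exp_neg]
    exact inv_anti₀ two_pos (by linarith [Real.add_one_le_exp (1 : ℝ)])
  have hexp : Real.exp (2 - 31 / 4 * p) ≤ 2⁻¹ ^ p * (1 / 3) := by
    calc Real.exp (2 - 31 / 4 * p) ≤ Real.exp (-1 * p + (-1 + -1)) :=
          Real.exp_le_exp.2 (by linarith)
      _ = Real.exp (-1) ^ p * (Real.exp (-1) * Real.exp (-1)) := by
        rw [Real.exp_add, Real.exp_mul, Real.exp_add]
      _ ≤ 2⁻¹ ^ p * (2⁻¹ * 2⁻¹) := by gcongr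
      _ ≤ 2⁻¹ ^ p * (1 / 3) := by gcongr; norm_num
  have hratio : (3⁻¹ : ℝ) ^ p ≤ 2⁻¹ ^ p * (2 / 3) := by
    calc (3⁻¹ : ℝ) ^ p = 2⁻¹ ^ p * (2 / 3) ^ p := by
          rw [← Real.mul_rpow (by norm_num) (by norm_num)]; norm_num
      _ ≤ 2⁻¹ ^ p * (2 / 3) := by
        gcongr
        exact Real.rpow_le_self_of_le_one (by norm_num) (by norm_num) hp
  linarith

end GoodLambda

section CondExp

lemma stronglyMeasurable_apply_of_continuous {Ω E F : Type*} {m : MeasurableSpace Ω}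
    [TopologicalSpace E] [TopologicalSpace F] [TopologicalSpace.PseudoMetrizableSpace F]
    {v : Ω → E → F} {f : Ω → E} (hv : ∀ ω, Continuous (v ω))
    (hvx : ∀ x, StronglyMeasurable fun ω => v ω x) (hf : StronglyMeasurable f) :
    StronglyMeasurable fun ω => v ω (f ω) := by
  classical
  have hsimple (s : SimpleFunc Ω E) : StronglyMeasurable fun ω => v ω (s ω) := by
    rcases isEmpty_or_nonempty E with hE | hE
    · have : IsEmpty Ω := ⟨fun ω => hE.elim (f ω)⟩
      exact .of_subsingleton_dom
    · induction s using SimpleFunc.induction' with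
      | const x => exact hvx x
      | @pcw g h S hS hg hh =>
        have hpiece : (fun ω => v ω (g.piecewise S hS h ω)) =
            S.piecewise (fun ω => v ω (g ω)) fun ω => v ω (h ω) := by
          ext ω
          by_cases hω : ω ∈ S <;> simp [hω]
        exact hpiece ▸ hg.piecewise hS hh
  refine stronglyMeasurable_of_tendsto Filter.atTop (fun n => hsimple (hf.approx n)) ?_
  exact tendsto_pi_nhds.2 fun ω => ((hv ω).tendsto _).comp (hf.tendsto_approx ω)

variable {Ω : Type*} {m m0 : MeasurableSpace Ω} {μ : Measure Ω}

lemma integral_mul_le_of_condExp_le (hm : m ≤ m0) [SigmaFinite (μ.trim hm)] {w g h : Ω → ℝ}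
    (hw : StronglyMeasurable[m] w) (hw0 : 0 ≤ w) (hwg : Integrable (w * g) μ)
    (hg : Integrable g μ) (hwh : Integrable (w * h) μ) (hgh : μ[g | m] ≤ᵐ[μ] h) :
    ∫ ω, w ω * g ω ∂μ ≤ ∫ ω, w ω * h ω ∂μ := by
  change ∫ ω, (w * g) ω ∂μ ≤ _
  rw [← integral_condExp hm]
  refine integral_mono_ae integrable_condExp hwh ?_
  filter_upwards [condExp_mul_of_stronglyMeasurable_left hw hwg hg, hgh] with ω hpull hle
  rw [hpull]
  exact mul_le_mul_of_nonneg_left hle (hw0 ω)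

lemma condExp_norm_sub_norm_sub_nonpos {E : Type*} [NormedAddCommGroup E] [NormedSpace ℝ E]
    [CompleteSpace E] (hm : m ≤ m0) [SigmaFinite (μ.trim hm)] {f d : Ω → E}
    (hf : StronglyMeasurable[m] f) (hfi : Integrable f μ) (hd : Integrable d μ)
    (hd0 : μ[d | m] =ᵐ[μ] 0) :
    μ[fun ω => ‖f ω‖ - ‖f ω - d ω‖ | m] ≤ᵐ[μ] 0 := by
  filter_upwards [condExp_sub hfi hd m, hd0, condExp_sub hfi.norm (hfi.sub hd).norm m,
    norm_condExp_le (m := m) (μ := μ) (f - d)] with ω hsub hd hnorm hjensen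
  rw [hsub, Pi.sub_apply, hd, condExp_of_stronglyMeasurable hm hf hfi, Pi.zero_apply, sub_zero]
    at hjensen
  refine hnorm.trans_le ?_
  rw [Pi.sub_apply, condExp_of_stronglyMeasurable hm hf.norm hfi.norm]
  exact sub_nonpos.2 hjensen

lemma condExp_sub_ae_eq_zero {E : Type*} [NormedAddCommGroup E] [NormedSpace ℝ E]
    [CompleteSpace E] (hm : m ≤ m0) [SigmaFinite (μ.trim hm)] {f g : Ω → E}
    (hf : StronglyMeasurable[m] f) (hfi : Integrable f μ) (hg : Integrable g μ)
    (hgf : μ[g | m] =ᵐ[μ] f) : μ[g - f | m] =ᵐ[μ] 0 := by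
  filter_upwards [condExp_sub hg hfi m, hgf] with ω hsub hω
  rw [hsub, Pi.sub_apply, hω, condExp_of_stronglyMeasurable hm hf hfi, sub_self, Pi.zero_apply]

lemma sum_condExp_sup_zero_ae_eq {ℱ : ℕ → MeasurableSpace Ω} {f : ℕ → Ω → ℝ}
    (hf : ∀ i, 0 ≤ f i) (n : ℕ) :
    (fun ω => ∑ i ∈ Finset.range n, (μ[f i | ℱ i] ⊔ 0) ω) =ᵐ[μ]
      fun ω => ∑ i ∈ Finset.range n, (μ[f i | ℱ i]) ω := by
  filter_upwards [ae_all_iff.2 fun i => condExp_nonneg (m := ℱ i) (.of_forall (hf i))] with ω hω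
  exact Finset.sum_congr rfl fun i _ => sup_eq_left.2 (hω i)

end CondExp

/-- One step `x ↦ v x + d` of a driven process, taken between the σ-algebras `m` and `m'`: the
map `v` is an `m`-measurable random nonexpansive map fixing the origin, `d` is an
`m'`-measurable martingale difference, and `σ` is an everywhere nonnegative `m`-measurable
majorant of its conditional second moment. -/
structure IsNonexpansiveStep {Ω X : Type*} [NormedAddCommGroup X] [NormedSpace ℝ X]
    {m0 : MeasurableSpace Ω} (μ : Measure Ω) (m m' : MeasurableSpace Ω) (v : Ω → X → X)
    (d : Ω → X) (σ : Ω → ℝ) : Prop where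
  lipschitz : ∀ ω, LipschitzWith 1 (v ω)
  map_zero : ∀ ω, v ω 0 = 0
  predictable : ∀ x, StronglyMeasurable[m] fun ω => v ω x
  adapted : StronglyMeasurable[m'] d
  memLp : MemLp d 2 μ
  condExp_eq_zero : μ[d | m] =ᵐ[μ] 0
  nonneg : 0 ≤ σ
  stronglyMeasurable_bound : StronglyMeasurable[m] σ
  integrable_bound : Integrable σ μ
  condExp_sq_le : μ[fun ω => ‖d ω‖ ^ 2 | m] ≤ᵐ[μ] σ

namespace IsNonexpansiveStep

variable {Ω X : Type*} [NormedAddCommGroup X] [NormedSpace ℝ X] {m0 : MeasurableSpace Ω}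
  {μ : Measure Ω} {m m' : MeasurableSpace Ω} {v : Ω → X → X} {d : Ω → X} {σ : Ω → ℝ}

lemma id_zero : IsNonexpansiveStep μ m m' (fun _ => (id : X → X)) 0 0 where
  lipschitz _ := LipschitzWith.id
  map_zero _ := rfl
  predictable _ := stronglyMeasurable_const
  adapted := stronglyMeasurable_zero
  memLp := .zero
  condExp_eq_zero := by rw [condExp_zero]
  nonneg := le_rfl
  stronglyMeasurable_bound := stronglyMeasurable_zero
  integrable_bound := integrable_zero _ _ _
  condExp_sq_le := by
    have hzero : (fun ω => ‖(0 : Ω → X) ω‖ ^ 2) = (0 : Ω → ℝ) := by ext; simp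
    rw [hzero, condExp_zero]

lemma of_condExp (hlip : ∀ ω, LipschitzWith 1 (v ω)) (hzero : ∀ ω, v ω 0 = 0)
    (hpred : ∀ x, StronglyMeasurable[m] fun ω => v ω x) (hd : StronglyMeasurable[m'] d)
    (hd2 : MemLp d 2 μ) (hd0 : μ[d | m] =ᵐ[μ] 0) :
    IsNonexpansiveStep μ m m' v d (μ[fun ω => ‖d ω‖ ^ 2 | m] ⊔ 0) where
  lipschitz := hlip
  map_zero := hzero
  predictable := hpred
  adapted := hd
  memLp := hd2
  condExp_eq_zero := hd0
  nonneg := le_sup_right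
  stronglyMeasurable_bound := continuous_max.comp_stronglyMeasurable
    (stronglyMeasurable_condExp.prodMk stronglyMeasurable_zero)
  integrable_bound := integrable_condExp.sup (integrable_zero _ _ _)
  condExp_sq_le := .of_forall fun _ => le_sup_left

lemma norm_apply_le (h : IsNonexpansiveStep μ m m' v d σ) (ω : Ω) (x : X) :
    ‖v ω x‖ ≤ ‖x‖ := by
  simpa [h.map_zero ω] using (h.lipschitz ω).norm_sub_le x 0

lemma integrable [IsFiniteMeasure μ] (h : IsNonexpansiveStep μ m m' v d σ) :
    Integrable d μ :=
  h.memLp.integrable one_le_two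

lemma integrable_sq_norm (h : IsNonexpansiveStep μ m m' v d σ) :
    Integrable (fun ω => ‖d ω‖ ^ 2) μ :=
  MemLp.integrable_norm_pow (p := 2) h.memLp two_ne_zero

lemma smul [CompleteSpace X] (h : IsNonexpansiveStep μ m m' v d σ) {θ : ℝ} (hθ : θ ≠ 0) :
    IsNonexpansiveStep μ m m' (fun ω x => θ • v ω (θ⁻¹ • x)) (θ • d) (θ ^ 2 • σ) where
  lipschitz ω := by
    refine (((lipschitzWith_smul θ).comp (h.lipschitz ω)).comp
      (lipschitzWith_smul θ⁻¹)).weaken ?_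
    rw [mul_one, nnnorm_inv, mul_inv_cancel₀ (nnnorm_ne_zero_iff.2 hθ)]
  map_zero ω := by rw [smul_zero, h.map_zero, smul_zero]
  predictable x := (h.predictable (θ⁻¹ • x)).const_smul θ
  adapted := h.adapted.const_smul θ
  memLp := h.memLp.const_smul θ
  condExp_eq_zero := by
    filter_upwards [condExp_smul (μ := μ) θ d m, h.condExp_eq_zero] with ω hsmul hzero
    rw [hsmul, Pi.smul_apply, hzero, Pi.zero_apply, smul_zero]
  nonneg := smul_nonneg (sq_nonneg θ) h.nonneg
  stronglyMeasurable_bound := h.stronglyMeasurable_bound.const_smul _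
  integrable_bound := h.integrable_bound.smul _
  condExp_sq_le := by
    have hsq : (fun ω => ‖(θ • d) ω‖ ^ 2) = θ ^ 2 • fun ω => ‖d ω‖ ^ 2 := by
      ext ω
      simp [norm_smul, mul_pow]
    rw [hsq]
    filter_upwards [condExp_smul (μ := μ) (θ ^ 2) (fun ω => ‖d ω‖ ^ 2) m, h.condExp_sq_le]
      with ω hsmul hle
    rw [hsmul]
    exact mul_le_mul_of_nonneg_left hle (sq_nonneg θ)

open scoped Classical in
lemma piecewise_id [CompleteSpace X] [IsFiniteMeasure μ] (h : IsNonexpansiveStep μ m m' v d σ)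
    (hmm' : m ≤ m') (hm : m ≤ m0) {S : Set Ω} (hS : MeasurableSet[m] S) :
    IsNonexpansiveStep μ m m' (S.piecewise v fun _ => id) (S.indicator d) σ where
  lipschitz ω := by
    by_cases hω : ω ∈ S
    · simpa [hω] using h.lipschitz ω
    · simpa [hω] using LipschitzWith.id
  map_zero ω := by by_cases hω : ω ∈ S <;> simp [hω, h.map_zero]
  predictable x := by
    have hpiece : (fun ω => S.piecewise v (fun _ => id) ω x) =
        S.piecewise (fun ω => v ω x) fun _ => x := by
      ext ω
      by_cases hω : ω ∈ S <;> simp [hω]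
    exact hpiece ▸ (h.predictable x).piecewise hS stronglyMeasurable_const
  adapted := h.adapted.indicator (hmm' S hS)
  memLp := h.memLp.indicator (hm S hS)
  condExp_eq_zero := by
    filter_upwards [condExp_indicator h.integrable hS, h.condExp_eq_zero] with ω hind hzero
    rw [hind]
    by_cases hω : ω ∈ S <;> simp [hω, hzero]
  nonneg := h.nonneg
  stronglyMeasurable_bound := h.stronglyMeasurable_bound
  integrable_bound := h.integrable_bound
  condExp_sq_le := by
    have hsq : (fun ω => ‖S.indicator d ω‖ ^ 2) = S.indicator fun ω => ‖d ω‖ ^ 2 := by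
      ext ω
      by_cases hω : ω ∈ S <;> simp [hω]
    rw [hsq]
    filter_upwards [condExp_indicator h.integrable_sq_norm hS, h.condExp_sq_le]
      with ω hind hle
    rw [hind]
    exact Set.indicator_apply_le' (fun _ => hle) fun _ => h.nonneg ω

variable [IsFiniteMeasure μ]

lemma integrable_one_add_add (h : IsNonexpansiveStep μ m m' v d σ) (hm : m ≤ m0) {f : Ω → X}
    (hf : Integrable f μ) {u : Ω → ℝ} (hu : StronglyMeasurable[m] u)
    (hu1 : ∀ ω, ‖u ω‖ ≤ 1) (a : ℝ) :
    Integrable (fun ω => 1 + a * ‖d ω‖ ^ 2 + u ω * (‖f ω‖ - ‖f ω - d ω‖)) μ :=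
  ((integrable_const 1).add (h.integrable_sq_norm.const_mul a)).add
    ((hf.norm.sub (hf.sub h.integrable).norm).bdd_mul (hu.mono hm).aestronglyMeasurable
      (.of_forall hu1))

variable [CompleteSpace X]

lemma condExp_one_add_add_le (h : IsNonexpansiveStep μ m m' v d σ) (hm : m ≤ m0) {f : Ω → X}
    (hf : StronglyMeasurable[m] f) (hfi : Integrable f μ) {u : Ω → ℝ}
    (hu : StronglyMeasurable[m] u) (hu0 : 0 ≤ u) (hu1 : ∀ ω, ‖u ω‖ ≤ 1) {a : ℝ}
    (ha : 0 ≤ a) :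
    μ[fun ω => 1 + a * ‖d ω‖ ^ 2 + u ω * (‖f ω‖ - ‖f ω - d ω‖) | m] ≤ᵐ[μ]
      fun ω => 1 + a * σ ω := by
  have hsq : Integrable (a • fun ω => ‖d ω‖ ^ 2) μ := h.integrable_sq_norm.smul a
  have hgain : Integrable (fun ω => ‖f ω‖ - ‖f ω - d ω‖) μ :=
    hfi.norm.sub (hfi.sub h.integrable).norm
  have hugain : Integrable (u * fun ω => ‖f ω‖ - ‖f ω - d ω‖) μ :=
    hgain.bdd_mul (hu.mono hm).aestronglyMeasurable (.of_forall hu1)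
  filter_upwards [condExp_add ((integrable_const (1 : ℝ)).add hsq) hugain m,
    condExp_add (integrable_const (1 : ℝ)) hsq m,
    condExp_smul (μ := μ) a (fun ω => ‖d ω‖ ^ 2) m, h.condExp_sq_le,
    condExp_mul_of_stronglyMeasurable_left hu hugain hgain,
    condExp_norm_sub_norm_sub_nonpos hm hf hfi h.integrable h.condExp_eq_zero]
    with ω hadd hadd' hsmul hvar hpull hjensen
  refine hadd.trans_le ?_
  rw [Pi.add_apply, hadd', Pi.add_apply, hsmul, hpull, condExp_const hm]
  have hcorr := mul_nonpos_of_nonneg_of_nonpos (hu0 ω) hjensen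
  have hquad := mul_le_mul_of_nonneg_left hvar ha
  simp only [Pi.smul_apply, Pi.mul_apply, smul_eq_mul] at hcorr hquad ⊢
  linarith

lemma integral_mul_truncated_exp_le (h : IsNonexpansiveStep μ m m' v d σ) (hm : m ≤ m0) {D : ℝ}
    (hX : IsTwoSmooth X D) {f : Ω → X} (hf : StronglyMeasurable[m] f) (hfi : Integrable f μ)
    {w : Ω → ℝ} (hw : StronglyMeasurable[m] w) (hw0 : 0 ≤ w) {C : ℝ}
    (hwC : ∀ ω, w ω * Real.exp (smoothNorm (f ω)) ≤ C) :
    ∫ ω, w ω * (if ‖d ω‖ ≤ 1 then Real.exp (smoothNorm (f ω + d ω)) else 0) ∂μ ≤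
      ∫ ω, w ω * Real.exp (smoothNorm (f ω)) * (1 + 4 * D ^ 2 * σ ω) ∂μ := by
  set W : Ω → ℝ := fun ω => w ω * Real.exp (smoothNorm (f ω))
  set u : Ω → ℝ := fun ω => ‖f ω‖ / smoothNorm (f ω)
  have hsN : StronglyMeasurable[m] fun ω => smoothNorm (f ω) :=
    continuous_smoothNorm.comp_stronglyMeasurable hf
  have hu : StronglyMeasurable[m] u := hf.norm.div₀ hsN fun ω =>
    (zero_lt_one.trans_le (one_le_smoothNorm (f ω))).ne'
  have hu0 : 0 ≤ u := fun ω => div_nonneg (norm_nonneg _) (Real.sqrt_nonneg _)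
  have hu1 (ω : Ω) : ‖u ω‖ ≤ 1 := by
    rw [Real.norm_of_nonneg (hu0 ω)]
    exact norm_div_smoothNorm_le_one (f ω)
  have hW : StronglyMeasurable[m] W := hw.mul (Real.continuous_exp.comp_stronglyMeasurable hsN)
  have hW0 : 0 ≤ W := fun ω => mul_nonneg (hw0 ω) (Real.exp_pos _).le
  have hWg {g : Ω → ℝ} (hg : Integrable g μ) : Integrable (W * g) μ :=
    hg.bdd_mul (hW.mono hm).aestronglyMeasurable (c := C) (.of_forall fun ω => by
      rw [Real.norm_of_nonneg (hW0 ω)]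
      exact hwC ω)
  have hmaj := h.integrable_one_add_add hm hfi hu hu1 (4 * D ^ 2)
  calc ∫ ω, w ω * (if ‖d ω‖ ≤ 1 then Real.exp (smoothNorm (f ω + d ω)) else 0) ∂μ
      ≤ ∫ ω, W ω * (1 + 4 * D ^ 2 * ‖d ω‖ ^ 2 + u ω * (‖f ω‖ - ‖f ω - d ω‖)) ∂μ := by
        refine integral_mono_of_nonneg (.of_forall fun ω => mul_nonneg (hw0 ω) ?_) (hWg hmaj)
          (.of_forall fun ω => ?_)
        · split_ifs <;> positivity
        · simp only [W, mul_assoc (w ω)]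
          exact mul_le_mul_of_nonneg_left (hX.exp_smoothNorm_add_truncated_le _ _) (hw0 ω)
    _ ≤ ∫ ω, W ω * (1 + 4 * D ^ 2 * σ ω) ∂μ :=
        integral_mul_le_of_condExp_le hm hW hW0 (hWg hmaj) hmaj
          (hWg ((integrable_const 1).add (h.integrable_bound.const_mul _)))
          (h.condExp_one_add_add_le hm hf hfi hu hu0 hu1 (by positivity))

end IsNonexpansiveStep

section DrivenSeq

variable {Ω X : Type*} [NormedAddCommGroup X]

/-- The process `N₀ = 0`, `N_{j+1} = V_j N_j + d_j`. The map and the increment of the step from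
`j` to `j + 1` carry the index `j`. -/
def drivenSeq (V : ℕ → Ω → X → X) (d : ℕ → Ω → X) : ℕ → Ω → X
  | 0 => 0
  | j + 1 => fun ω => V j ω (drivenSeq V d j ω) + d j ω

variable {V : ℕ → Ω → X → X} {d : ℕ → Ω → X}

lemma drivenSeq_zero : drivenSeq V d 0 = 0 := rfl

lemma drivenSeq_succ (j : ℕ) (ω : Ω) :
    drivenSeq V d (j + 1) ω = V j ω (drivenSeq V d j ω) + d j ω := rfl

lemma norm_drivenSeq_le (hV : ∀ i ω x, ‖V i ω x‖ ≤ ‖x‖) (j : ℕ) (ω : Ω) :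
    ‖drivenSeq V d j ω‖ ≤ ∑ i ∈ Finset.range j, ‖d i ω‖ := by
  induction j with
  | zero => simp [drivenSeq_zero]
  | succ j ih =>
    rw [drivenSeq_succ, Finset.sum_range_succ]
    exact norm_add_le_of_le ((hV j ω _).trans ih) le_rfl

lemma drivenSeq_smul [NormedSpace ℝ X] {θ : ℝ} (hθ : θ ≠ 0) :
    drivenSeq (fun i ω x => θ • V i ω (θ⁻¹ • x)) (fun i => θ • d i) =
      θ • drivenSeq V d := by
  ext j ω
  induction j with
  | zero => simp [drivenSeq_zero]
  | succ j ih => simp [drivenSeq_succ, ih, inv_smul_smul₀ hθ]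

lemma drivenSeq_eq_zero (hV : ∀ i ω, V i ω 0 = 0) {A : ℕ → Set Ω} (hA : Monotone A)
    (hdA : ∀ i, ∀ ω ∉ A i, d i ω = 0) {j : ℕ} {ω : Ω} (hω : ω ∉ A j) :
    drivenSeq V d (j + 1) ω = 0 := by
  induction j with
  | zero => rw [drivenSeq_succ, drivenSeq_zero, Pi.zero_apply, hV, hdA 0 ω hω, add_zero]
  | succ j ih =>
    rw [drivenSeq_succ, ih fun hωj => hω (hA j.le_succ hωj), hV, hdA _ ω hω, add_zero]

/-- The running maximum `max_{j ≤ n} ‖N_j‖`. -/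
def runningMax (N : ℕ → Ω → X) (n : ℕ) (ω : Ω) : ℝ :=
  partialSups (fun j => ‖N j ω‖) n

variable {N : ℕ → Ω → X} {ω : Ω}

lemma runningMax_zero : runningMax N 0 ω = ‖N 0 ω‖ := partialSups_zero _

lemma runningMax_succ (n : ℕ) :
    runningMax N (n + 1) ω = runningMax N n ω ⊔ ‖N (n + 1) ω‖ :=
  partialSups_add_one _ n

lemma norm_le_runningMax {j n : ℕ} (hjn : j ≤ n) : ‖N j ω‖ ≤ runningMax N n ω :=
  le_partialSups_of_le (fun j => ‖N j ω‖) hjn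

lemma runningMax_le {n : ℕ} {c : ℝ} (h : ∀ j ≤ n, ‖N j ω‖ ≤ c) : runningMax N n ω ≤ c :=
  partialSups_le _ _ _ h

lemma runningMax_nonneg (n : ℕ) : 0 ≤ runningMax N n ω :=
  (norm_nonneg (N 0 ω)).trans (norm_le_runningMax n.zero_le)

lemma monotone_runningMax : Monotone fun n => runningMax N n ω :=
  (partialSups fun j => ‖N j ω‖).monotone

lemma monotone_setOf_lt_runningMax (r : ℝ) : Monotone fun n => {ω | r < runningMax N n ω} :=
  fun _ _ hij _ hω => lt_of_lt_of_le hω (monotone_runningMax hij)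

lemma runningMax_smul [NormedSpace ℝ X] (θ : ℝ) (n : ℕ) :
    runningMax (θ • N) n ω = ‖θ‖ * runningMax N n ω := by
  induction n with
  | zero => simp [runningMax_zero, norm_smul]
  | succ n ih => simp [runningMax_succ, ih, norm_smul, mul_max_of_nonneg]

lemma stronglyMeasurable_runningMax {m0 : MeasurableSpace Ω} {ℱ : Filtration ℕ m0}
    (hN : ∀ j, StronglyMeasurable[ℱ j] (N j)) (n : ℕ) :
    StronglyMeasurable[ℱ n] (runningMax N n) := by
  induction n with
  | zero => exact (hN 0).norm
  | succ n ih =>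
    have hsup : runningMax N (n + 1) = fun ω => max (runningMax N n ω) ‖N (n + 1) ω‖ :=
      funext fun _ => runningMax_succ n
    exact hsup ▸ continuous_max.comp_stronglyMeasurable
      ((ih.mono (ℱ.mono n.le_succ)).prodMk (hN (n + 1)).norm)

variable [NormedSpace ℝ X] {m0 : MeasurableSpace Ω} {μ : Measure Ω} {ℱ : Filtration ℕ m0}
  {σ : ℕ → Ω → ℝ}

lemma stronglyMeasurable_drivenSeq
    (h : ∀ i, IsNonexpansiveStep μ (ℱ i) (ℱ (i + 1)) (V i) (d i) (σ i)) (j : ℕ) :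
    StronglyMeasurable[ℱ j] (drivenSeq V d j) := by
  induction j with
  | zero => exact stronglyMeasurable_zero
  | succ j ih =>
    exact ((stronglyMeasurable_apply_of_continuous (fun ω => ((h j).lipschitz ω).continuous)
      (h j).predictable ih).mono (ℱ.mono j.le_succ)).add (h j).adapted

lemma integrable_drivenSeq [IsFiniteMeasure μ]
    (h : ∀ i, IsNonexpansiveStep μ (ℱ i) (ℱ (i + 1)) (V i) (d i) (σ i)) (j : ℕ) :
    Integrable (drivenSeq V d j) μ :=
  .mono' (integrable_finsetSum (Finset.range j) fun i _ => (h i).integrable.norm)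
    ((stronglyMeasurable_drivenSeq h j).mono (ℱ.le j)).aestronglyMeasurable
    (.of_forall fun ω => norm_drivenSeq_le (fun i => (h i).norm_apply_le) j ω)

end DrivenSeq

section Potential

variable {Ω X : Type*} [NormedAddCommGroup X]

/-- The event that the first `j` increments have norm at most one. -/
def smallJumps (d : ℕ → Ω → X) (j : ℕ) : Set Ω :=
  {ω | ∀ i < j, ‖d i ω‖ ≤ 1}

/-- The predictable factor that compensates the exponential growth of the potential, given
conditional second moments `σ` in a `(2, D)`-smooth space. -/
noncomputable def discount (D : ℝ) (σ : ℕ → Ω → ℝ) (j : ℕ) (ω : Ω) : ℝ :=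
  Real.exp (-(4 * D ^ 2 * ∑ i ∈ Finset.range j, σ i ω))

/-- The exponential potential of the driven process, discounted by the accumulated conditional
variance and killed by the first large jump. It is switched on by the increasing events `A j`. -/
noncomputable def discountedPotential (V : ℕ → Ω → X → X) (d : ℕ → Ω → X) (D : ℝ)
    (σ : ℕ → Ω → ℝ) (A : ℕ → Set Ω) (j : ℕ) : Ω → ℝ :=
  (A j ∩ smallJumps d j).indicator fun ω =>
    discount D σ j ω * Real.exp (smoothNorm (drivenSeq V d j ω))

variable {V : ℕ → Ω → X → X} {d : ℕ → Ω → X} {D : ℝ} {σ : ℕ → Ω → ℝ} {A : ℕ → Set Ω}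

lemma mem_smallJumps_succ {j : ℕ} {ω : Ω} :
    ω ∈ smallJumps d (j + 1) ↔ ω ∈ smallJumps d j ∧ ‖d j ω‖ ≤ 1 :=
  Nat.forall_lt_succ_right

lemma discount_pos (j : ℕ) (ω : Ω) : 0 < discount D σ j ω := Real.exp_pos _

lemma discount_le_one (hσ : ∀ i, 0 ≤ σ i) (j : ℕ) (ω : Ω) : discount D σ j ω ≤ 1 := by
  have hsum : 0 ≤ ∑ i ∈ Finset.range j, σ i ω := Finset.sum_nonneg fun i _ => hσ i ω
  exact Real.exp_le_one_iff.2 (neg_nonpos.2 (by positivity))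

lemma discount_succ_mul_le (j : ℕ) (ω : Ω) :
    discount D σ (j + 1) ω * (1 + 4 * D ^ 2 * σ j ω) ≤ discount D σ j ω := by
  calc discount D σ (j + 1) ω * (1 + 4 * D ^ 2 * σ j ω)
      ≤ discount D σ (j + 1) ω * Real.exp (4 * D ^ 2 * σ j ω) := by
        refine mul_le_mul_of_nonneg_left ?_ (discount_pos _ _).le
        linarith [Real.add_one_le_exp (4 * D ^ 2 * σ j ω)]
    _ = discount D σ j ω := by
        rw [discount, discount, ← Real.exp_add, Finset.sum_range_succ]
        ring_nf

lemma exp_smoothNorm_drivenSeq_le (hV : ∀ i ω x, ‖V i ω x‖ ≤ ‖x‖) {j : ℕ} {ω : Ω}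
    (hω : ω ∈ smallJumps d j) :
    Real.exp (smoothNorm (drivenSeq V d j ω)) ≤ Real.exp (1 + j) := by
  gcongr
  calc smoothNorm (drivenSeq V d j ω) ≤ 1 + ‖drivenSeq V d j ω‖ :=
        smoothNorm_le_one_add_norm _
    _ ≤ 1 + ∑ i ∈ Finset.range j, ‖d i ω‖ := by
        gcongr
        exact norm_drivenSeq_le hV j ω
    _ ≤ 1 + ∑ _i ∈ Finset.range j, 1 := by
        gcongr with i hi
        exact hω i (Finset.mem_range.1 hi)
    _ = 1 + j := by simp

lemma discountedPotential_nonneg (j : ℕ) : 0 ≤ discountedPotential V d D σ A j :=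
  Set.indicator_nonneg fun ω _ => mul_nonneg (discount_pos j ω).le (Real.exp_pos _).le

lemma discountedPotential_zero_le (ω : Ω) :
    discountedPotential V d D σ A 0 ω ≤ (A 0).indicator (fun _ => Real.exp 1) ω := by
  simp [discountedPotential, smallJumps, discount, drivenSeq_zero, smoothNorm_zero]

lemma discountedPotential_succ_le_of_notMem (hV : ∀ i ω, V i ω 0 = 0) (hσ : ∀ i, 0 ≤ σ i)
    (hA : Monotone A) (hdA : ∀ i, ∀ ω ∉ A i, d i ω = 0) {j : ℕ} {ω : Ω} (hω : ω ∉ A j) :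
    discountedPotential V d D σ A (j + 1) ω ≤ (A (j + 1)).indicator (fun _ => Real.exp 1) ω := by
  rw [discountedPotential, ← Set.indicator_indicator]
  refine Set.indicator_le_indicator ?_
  refine Set.indicator_apply_le' (fun _ => ?_) fun _ => (Real.exp_pos 1).le
  rw [drivenSeq_eq_zero hV hA hdA hω, smoothNorm_zero]
  exact mul_le_of_le_one_left (Real.exp_pos 1).le (discount_le_one hσ _ ω)

lemma indicator_discountedPotential_succ (hA : Monotone A) (j : ℕ) (ω : Ω) :
    (A j).indicator (discountedPotential V d D σ A (j + 1)) ω =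
      (A j ∩ smallJumps d j).indicator (discount D σ (j + 1)) ω *
        (if ‖d j ω‖ ≤ 1 then
          Real.exp (smoothNorm (V j ω (drivenSeq V d j ω) + d j ω)) else 0) := by
  classical
  by_cases hωA : ω ∈ A j
  · have hωA' : ω ∈ A (j + 1) := hA j.le_succ hωA
    simp only [discountedPotential, Set.indicator_apply, Set.mem_inter_iff, hωA, hωA',
      mem_smallJumps_succ, true_and, if_true, drivenSeq_succ]
    split_ifs <;> simp_all
  · simp [hωA]

lemma indicator_mul_exp_smoothNorm_le (hV : ∀ i ω x, ‖V i ω x‖ ≤ ‖x‖) (j : ℕ) (ω : Ω) :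
    (A j ∩ smallJumps d j).indicator (discount D σ (j + 1)) ω *
        Real.exp (smoothNorm (V j ω (drivenSeq V d j ω))) * (1 + 4 * D ^ 2 * σ j ω) ≤
      discountedPotential V d D σ A j ω := by
  have hexp : Real.exp (smoothNorm (V j ω (drivenSeq V d j ω))) ≤
      Real.exp (smoothNorm (drivenSeq V d j ω)) :=
    Real.exp_le_exp.2 (smoothNorm_le_smoothNorm (hV j ω _))
  by_cases hω : ω ∈ A j ∩ smallJumps d j
  · rw [discountedPotential, Set.indicator_of_mem hω, Set.indicator_of_mem hω, mul_right_comm]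
    exact mul_le_mul (discount_succ_mul_le j ω) hexp (Real.exp_pos _).le (discount_pos j ω).le
  · simp [discountedPotential, hω]

lemma stronglyMeasurable_discount {m : MeasurableSpace Ω} {j : ℕ}
    (hσ : ∀ i < j, StronglyMeasurable[m] (σ i)) : StronglyMeasurable[m] (discount D σ j) :=
  Real.continuous_exp.comp_stronglyMeasurable
    ((Finset.stronglyMeasurable_fun_sum _ fun i hi =>
      hσ i (Finset.mem_range.1 hi)).const_mul _).neg

variable {m0 : MeasurableSpace Ω} {ℱ : Filtration ℕ m0}

lemma measurableSet_smallJumps (hd : ∀ i, StronglyMeasurable[ℱ (i + 1)] (d i)) (j : ℕ) :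
    MeasurableSet[ℱ j] (smallJumps d j) := by
  have hinter : smallJumps d j = ⋂ i, ⋂ _ : i < j, {ω | ‖d i ω‖ ≤ 1} := by
    ext ω
    simp [smallJumps]
  exact hinter ▸ MeasurableSet.iInter fun i => MeasurableSet.iInter fun hi =>
    ((hd i).mono (ℱ.mono hi)).norm.measurableSet_le stronglyMeasurable_const

variable [NormedSpace ℝ X] {μ : Measure Ω} [IsFiniteMeasure μ]

lemma integrable_discountedPotential
    (h : ∀ i, IsNonexpansiveStep μ (ℱ i) (ℱ (i + 1)) (V i) (d i) (σ i))
    (hA : ∀ i, MeasurableSet[ℱ i] (A i)) (j : ℕ) :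
    Integrable (discountedPotential V d D σ A j) μ := by
  refine .of_bound (C := Real.exp (1 + j)) (StronglyMeasurable.aestronglyMeasurable ?_)
    (.of_forall fun ω => ?_)
  · refine ((stronglyMeasurable_discount fun i _ =>
      (h i).stronglyMeasurable_bound.mono (ℱ.le i)).mul
      (Real.continuous_exp.comp_stronglyMeasurable (continuous_smoothNorm.comp_stronglyMeasurable
        ((stronglyMeasurable_drivenSeq h j).mono (ℱ.le j))))).indicator
      (ℱ.le j _ ((hA j).inter (measurableSet_smallJumps (fun i => (h i).adapted) j)))
  · rw [Real.norm_of_nonneg (discountedPotential_nonneg j ω)]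
    refine Set.indicator_apply_le' (fun hω => ?_) fun _ => (Real.exp_pos _).le
    exact (mul_le_of_le_one_left (Real.exp_pos _).le
      (discount_le_one (fun i => (h i).nonneg) j ω)).trans
      (exp_smoothNorm_drivenSeq_le (fun i => (h i).norm_apply_le) hω.2)

variable [CompleteSpace X]

lemma integral_indicator_discountedPotential_succ_le
    (h : ∀ i, IsNonexpansiveStep μ (ℱ i) (ℱ (i + 1)) (V i) (d i) (σ i)) (hX : IsTwoSmooth X D)
    (hA : ∀ i, MeasurableSet[ℱ i] (A i)) (hAmono : Monotone A) (j : ℕ) :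
    ∫ ω, (A j).indicator (discountedPotential V d D σ A (j + 1)) ω ∂μ ≤
      ∫ ω, discountedPotential V d D σ A j ω ∂μ := by
  set N := drivenSeq V d j
  set w : Ω → ℝ := (A j ∩ smallJumps d j).indicator (discount D σ (j + 1))
  have hV (i : ℕ) (ω : Ω) (x : X) : ‖V i ω x‖ ≤ ‖x‖ := (h i).norm_apply_le ω x
  have hVN : StronglyMeasurable[ℱ j] fun ω => V j ω (N ω) :=
    stronglyMeasurable_apply_of_continuous (fun ω => ((h j).lipschitz ω).continuous)
      (h j).predictable (stronglyMeasurable_drivenSeq h j)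
  have hVNi : Integrable (fun ω => V j ω (N ω)) μ :=
    (integrable_drivenSeq h j).mono (hVN.mono (ℱ.le j)).aestronglyMeasurable
      (.of_forall fun ω => hV j ω _)
  have hw : StronglyMeasurable[ℱ j] w :=
    (stronglyMeasurable_discount fun i hi => (h i).stronglyMeasurable_bound.mono
      (ℱ.mono (Nat.le_of_lt_succ hi))).indicator
      ((hA j).inter (measurableSet_smallJumps (fun i => (h i).adapted) j))
  have hw0 : 0 ≤ w := Set.indicator_nonneg fun ω _ => (discount_pos _ ω).le
  have hwC (ω : Ω) : w ω * Real.exp (smoothNorm (V j ω (N ω))) ≤ Real.exp (1 + j) := by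
    by_cases hω : ω ∈ A j ∩ smallJumps d j
    · rw [show w ω = discount D σ (j + 1) ω from Set.indicator_of_mem hω _]
      refine (mul_le_of_le_one_left (Real.exp_pos _).le
        (discount_le_one (fun i => (h i).nonneg) _ ω)).trans ?_
      exact (Real.exp_le_exp.2 (smoothNorm_le_smoothNorm (hV j ω _))).trans
        (exp_smoothNorm_drivenSeq_le hV hω.2)
    · rw [show w ω = 0 from Set.indicator_of_notMem hω _, zero_mul]
      exact (Real.exp_pos _).le
  simp_rw [indicator_discountedPotential_succ hAmono]
  refine ((h j).integral_mul_truncated_exp_le (ℱ.le j) hX hVN hVNi hw hw0 hwC).trans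
    (integral_mono_of_nonneg (.of_forall fun ω => ?_) (integrable_discountedPotential h hA j)
      (.of_forall (indicator_mul_exp_smoothNorm_le hV j)))
  have hσ : 0 ≤ σ j ω := (h j).nonneg ω
  have hwω : 0 ≤ w ω := hw0 ω
  positivity

lemma integral_discountedPotential_le
    (h : ∀ i, IsNonexpansiveStep μ (ℱ i) (ℱ (i + 1)) (V i) (d i) (σ i)) (hX : IsTwoSmooth X D)
    (hA : ∀ i, MeasurableSet[ℱ i] (A i)) (hAmono : Monotone A)
    (hdA : ∀ i, ∀ ω ∉ A i, d i ω = 0) (n : ℕ) :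
    ∫ ω, discountedPotential V d D σ A n ω ∂μ ≤ Real.exp 1 * μ.real (A n) := by
  have hAm (i : ℕ) : MeasurableSet (A i) := ℱ.le i _ (hA i)
  have hint (S : Set Ω) (hS : MeasurableSet S) : ∫ ω, S.indicator (fun _ => Real.exp 1) ω ∂μ =
      Real.exp 1 * μ.real S := by
    rw [integral_indicator_const _ hS, smul_eq_mul, mul_comm]
  induction n with
  | zero =>
    rw [← hint _ (hAm 0)]
    exact integral_mono (integrable_discountedPotential h hA 0)
      ((integrable_const _).indicator (hAm 0)) discountedPotential_zero_le
  | succ j ih =>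
    have hfresh : MeasurableSet (A (j + 1) \ A j) := (hAm _).diff (hAm j)
    have hZi := integrable_discountedPotential (D := D) h hA (j + 1)
    calc ∫ ω, discountedPotential V d D σ A (j + 1) ω ∂μ
        ≤ ∫ ω, ((A j).indicator (discountedPotential V d D σ A (j + 1)) ω +
            (A (j + 1) \ A j).indicator (fun _ => Real.exp 1) ω) ∂μ := by
          refine integral_mono hZi ((hZi.indicator (hAm j)).add
            ((integrable_const _).indicator hfresh)) fun ω => ?_
          by_cases hω : ω ∈ A j
          · simp [hω]
          · refine (discountedPotential_succ_le_of_notMem (fun i => (h i).map_zero)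
              (fun i => (h i).nonneg) hAmono hdA hω).trans_eq ?_
            by_cases hω' : ω ∈ A (j + 1) <;> simp [hω, hω']
      _ ≤ Real.exp 1 * μ.real (A j) + Real.exp 1 * μ.real (A (j + 1) \ A j) := by
          rw [integral_add (hZi.indicator (hAm j)) ((integrable_const _).indicator hfresh),
            hint _ hfresh]
          gcongr
          exact (integral_indicator_discountedPotential_succ_le h hX hA hAmono j).trans ih
      _ = Real.exp 1 * μ.real (A (j + 1)) := by
          rw [← mul_add, measureReal_sdiff (hAmono j.le_succ) (hAm j), add_sub_cancel]

end Potential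

section Window

variable {Ω X : Type*} [NormedAddCommGroup X]

/-- The predictable event that the running maximum of the driven process lies between the levels
`r` (exclusive) and `s` (inclusive) at time `i`. -/
def levelWindow (V : ℕ → Ω → X → X) (d : ℕ → Ω → X) (r s : ℝ) (i : ℕ) : Set Ω :=
  runningMax (drivenSeq V d) i ⁻¹' Set.Ioc r s

open scoped Classical in
/-- The maps driving `windowSeq`: those of the original process inside the level window, the
identity outside. -/
noncomputable def windowMap (V : ℕ → Ω → X → X) (d : ℕ → Ω → X) (r s : ℝ) (i : ℕ) :
    Ω → X → X :=
  (levelWindow V d r s i).piecewise (V i) fun _ => id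

/-- The increments driving `windowSeq`: those of the original process inside the level
window, zero outside. -/
noncomputable def windowIncrement (V : ℕ → Ω → X → X) (d : ℕ → Ω → X) (r s : ℝ) (i : ℕ) :
    Ω → X :=
  (levelWindow V d r s i).indicator (d i)

/-- The copy of the driven process that starts from the origin when the running maximum of the
original process exceeds `r` and is frozen once that maximum exceeds `s`. -/
noncomputable def windowSeq (V : ℕ → Ω → X → X) (d : ℕ → Ω → X) (r s : ℝ) : ℕ → Ω → X :=
  drivenSeq (windowMap V d r s) (windowIncrement V d r s)

variable {V : ℕ → Ω → X → X} {d : ℕ → Ω → X} {r s c : ℝ} {j : ℕ} {ω : Ω}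

lemma windowSeq_succ_of_mem (hω : ω ∈ levelWindow V d r s j) :
    windowSeq V d r s (j + 1) ω = V j ω (windowSeq V d r s j ω) + d j ω := by
  simp [windowSeq, drivenSeq_succ, windowMap, windowIncrement, hω]

lemma windowSeq_succ_of_notMem (hω : ω ∉ levelWindow V d r s j) :
    windowSeq V d r s (j + 1) ω = windowSeq V d r s j ω := by
  simp [windowSeq, drivenSeq_succ, windowMap, windowIncrement, hω]

lemma windowIncrement_eq_zero (hω : ¬r < runningMax (drivenSeq V d) j ω) :
    windowIncrement V d r s j ω = 0 :=
  Set.indicator_of_notMem (fun hmem => hω hmem.1) _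

lemma windowSeq_succ_eq_zero (hV0 : ∀ i ω, V i ω 0 = 0)
    (hω : runningMax (drivenSeq V d) j ω ≤ r) : windowSeq V d r s (j + 1) ω = 0 := by
  refine drivenSeq_eq_zero (fun i ω => ?_)
    (monotone_setOf_lt_runningMax (N := drivenSeq V d) r)
    (fun _ _ => windowIncrement_eq_zero) hω.not_gt
  by_cases hmem : ω ∈ levelWindow V d r s i <;> simp [windowMap, hmem, hV0]

lemma norm_drivenSeq_sub_windowSeq_le (hV : ∀ i ω, LipschitzWith 1 (V i ω))
    (hV0 : ∀ i ω, V i ω 0 = 0) (hr : 0 ≤ r) (hc : 0 ≤ c)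
    (hs : ∀ i < j, runningMax (drivenSeq V d) i ω ≤ s) (hd : ∀ i < j, ‖d i ω‖ ≤ c) :
    ‖drivenSeq V d j ω - windowSeq V d r s j ω‖ ≤ r + c := by
  induction j with
  | zero => simpa [drivenSeq_zero, windowSeq] using add_nonneg hr hc
  | succ j ih =>
    rcases le_or_gt (runningMax (drivenSeq V d) j ω) r with hle | hgt
    · rw [windowSeq_succ_eq_zero hV0 hle, sub_zero, drivenSeq_succ]
      refine norm_add_le_of_le ?_ (hd j j.lt_succ_self)
      calc ‖V j ω (drivenSeq V d j ω)‖ ≤ ‖drivenSeq V d j ω‖ := by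
            simpa [hV0] using (hV j ω).norm_sub_le (drivenSeq V d j ω) 0
        _ ≤ r := (norm_le_runningMax le_rfl).trans hle
    · rw [drivenSeq_succ, windowSeq_succ_of_mem ⟨hgt, hs j j.lt_succ_self⟩,
        add_sub_add_right_eq_sub]
      calc ‖V j ω (drivenSeq V d j ω) - V j ω (windowSeq V d r s j ω)‖
          ≤ ‖drivenSeq V d j ω - windowSeq V d r s j ω‖ := by
            simpa using (hV j ω).norm_sub_le (drivenSeq V d j ω) (windowSeq V d r s j ω)
        _ ≤ r + c := ih (fun i hi => hs i (hi.trans j.lt_succ_self))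
            fun i hi => hd i (hi.trans j.lt_succ_self)

lemma sub_le_norm_windowSeq (hV : ∀ i ω, LipschitzWith 1 (V i ω))
    (hV0 : ∀ i ω, V i ω 0 = 0) (hr : 0 ≤ r) (hrs : r ≤ s) (hc : 0 ≤ c)
    (hs : s < runningMax (drivenSeq V d) j ω) (hd : ∀ i < j, ‖d i ω‖ ≤ c) :
    s - r - c ≤ ‖windowSeq V d r s j ω‖ := by
  induction j with
  | zero =>
    rw [runningMax_zero, drivenSeq_zero, Pi.zero_apply, norm_zero] at hs
    exact absurd hs (hr.trans hrs).not_gt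
  | succ j ih =>
    rcases lt_or_ge s (runningMax (drivenSeq V d) j ω) with hlt | hge
    · rw [windowSeq_succ_of_notMem fun hmem => hlt.not_ge hmem.2]
      exact ih hlt fun i hi => hd i (hi.trans j.lt_succ_self)
    · have hN : s < ‖drivenSeq V d (j + 1) ω‖ := by
        rw [runningMax_succ, lt_sup_iff] at hs
        exact hs.resolve_left hge.not_gt
      have hclose := norm_drivenSeq_sub_windowSeq_le hV hV0 hr hc
        (fun i hi => (monotone_runningMax (Nat.le_of_lt_succ hi)).trans hge) hd
      linarith [norm_sub_norm_le (drivenSeq V d (j + 1) ω) (windowSeq V d r s (j + 1) ω)]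

variable [NormedSpace ℝ X] {m0 : MeasurableSpace Ω} {μ : Measure Ω} {ℱ : Filtration ℕ m0}
  {σ : ℕ → Ω → ℝ} {D : ℝ}

lemma exp_le_discountedPotential_window
    (h : ∀ i, IsNonexpansiveStep μ (ℱ i) (ℱ (i + 1)) (V i) (d i) (σ i)) (hr : 0 ≤ r)
    (hrs : r ≤ s) {q : ℝ} (hs : s < runningMax (drivenSeq V d) j ω)
    (hd : ∀ i < j, ‖d i ω‖ ≤ 1) (hσ : 4 * D ^ 2 * ∑ i ∈ Finset.range j, σ i ω ≤ q) :
    Real.exp (s - r - 1 - q) ≤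
      discountedPotential (windowMap V d r s) (windowIncrement V d r s) D σ
        (fun i => {ω | r < runningMax (drivenSeq V d) i ω}) j ω := by
  have hmem : ω ∈ {ω | r < runningMax (drivenSeq V d) j ω} ∩
      smallJumps (windowIncrement V d r s) j :=
    ⟨hrs.trans_lt hs, fun i hi => (norm_indicator_le_norm_self _ _).trans (hd i hi)⟩
  have hW : s - r - 1 ≤ smoothNorm (windowSeq V d r s j ω) :=
    (sub_le_norm_windowSeq (fun i => (h i).lipschitz) (fun i => (h i).map_zero) hr hrs
      zero_le_one hs hd).trans (norm_le_smoothNorm _)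
  rw [discountedPotential, Set.indicator_of_mem hmem, discount, ← Real.exp_add]
  exact Real.exp_le_exp.2 (by rw [windowSeq] at hW; linarith)

variable [CompleteSpace X] [IsFiniteMeasure μ]

lemma isNonexpansiveStep_window
    (h : ∀ i, IsNonexpansiveStep μ (ℱ i) (ℱ (i + 1)) (V i) (d i) (σ i)) (i : ℕ) :
    IsNonexpansiveStep μ (ℱ i) (ℱ (i + 1)) (windowMap V d r s i) (windowIncrement V d r s i)
      (σ i) :=
  (h i).piecewise_id (ℱ.mono i.le_succ) (ℱ.le i)
    ((stronglyMeasurable_runningMax (stronglyMeasurable_drivenSeq h) i).measurable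
      measurableSet_Ioc)

lemma measureReal_overshoot_le_of_norm_le_one
    (h : ∀ i, IsNonexpansiveStep μ (ℱ i) (ℱ (i + 1)) (V i) (d i) (σ i)) (hX : IsTwoSmooth X D)
    (hr : 0 ≤ r) (hrs : r ≤ s) (q : ℝ) (n : ℕ) :
    μ.real {ω | s < runningMax (drivenSeq V d) n ω ∧ (∀ i < n, ‖d i ω‖ ≤ 1) ∧
        4 * D ^ 2 * ∑ i ∈ Finset.range n, σ i ω ≤ q} ≤
      Real.exp (2 - (s - r) + q) * μ.real {ω | r < runningMax (drivenSeq V d) n ω} := by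
  have hA (i : ℕ) : MeasurableSet[ℱ i] {ω | r < runningMax (drivenSeq V d) i ω} :=
    StronglyMeasurable.measurableSet_lt stronglyMeasurable_const
      (stronglyMeasurable_runningMax (stronglyMeasurable_drivenSeq h) i)
  set Z := discountedPotential (windowMap V d r s) (windowIncrement V d r s) D σ
    (fun i => {ω | r < runningMax (drivenSeq V d) i ω}) n
  have hmarkov : Real.exp (s - r - 1 - q) * μ.real {ω | Real.exp (s - r - 1 - q) ≤ Z ω} ≤
      Real.exp 1 * μ.real {ω | r < runningMax (drivenSeq V d) n ω} :=
    (mul_meas_ge_le_integral_of_nonneg (.of_forall (discountedPotential_nonneg n))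
      (integrable_discountedPotential (isNonexpansiveStep_window h) hA n) _).trans
      (integral_discountedPotential_le (isNonexpansiveStep_window h) hX hA
        (monotone_setOf_lt_runningMax r) (fun _ _ => windowIncrement_eq_zero) n)
  have hexp : Real.exp (2 - (s - r) + q) = Real.exp 1 / Real.exp (s - r - 1 - q) := by
    rw [← Real.exp_sub]
    ring_nf
  rw [hexp, div_mul_eq_mul_div, le_div_iff₀' (Real.exp_pos _)]
  refine le_trans ?_ hmarkov
  refine mul_le_mul_of_nonneg_left (measureReal_mono ?_) (Real.exp_pos _).le
  exact fun ω hω => exp_le_discountedPotential_window h hr hrs hω.1 hω.2.1 hω.2.2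

lemma measureReal_overshoot_le
    (h : ∀ i, IsNonexpansiveStep μ (ℱ i) (ℱ (i + 1)) (V i) (d i) (σ i)) (hX : IsTwoSmooth X D)
    (hr : 0 ≤ r) (hrs : r ≤ s) (hc : 0 < c) (q : ℝ) (n : ℕ) :
    μ.real {ω | s < runningMax (drivenSeq V d) n ω ∧ (∀ i < n, ‖d i ω‖ ≤ c) ∧
        4 * D ^ 2 * ∑ i ∈ Finset.range n, σ i ω ≤ q * c ^ 2} ≤
      Real.exp (2 - (s - r) / c + q) *
        μ.real {ω | r < runningMax (drivenSeq V d) n ω} := by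
  have hc' : c⁻¹ ≠ 0 := inv_ne_zero hc.ne'
  have hscaled := measureReal_overshoot_le_of_norm_le_one (fun i => (h i).smul hc') hX
    (div_nonneg hr hc.le) (div_le_div_of_nonneg_right hrs hc.le) q n
  have hvar (x : ℝ) : 4 * D ^ 2 * (c⁻¹ ^ 2 * x) ≤ q ↔ 4 * D ^ 2 * x ≤ q * c ^ 2 := by
    rw [inv_pow, mul_left_comm, inv_mul_le_iff₀ (by positivity), mul_comm q]
  have hmax (x : ℝ) (ω : Ω) : x / c < runningMax (c⁻¹ • drivenSeq V d) n ω ↔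
      x < runningMax (drivenSeq V d) n ω := by
    rw [runningMax_smul, Real.norm_of_nonneg (inv_nonneg.2 hc.le), inv_mul_eq_div,
      div_lt_div_iff_of_pos_right hc]
  simpa only [drivenSeq_smul hc', hmax, Pi.smul_apply, norm_smul, smul_eq_mul,
    Real.norm_of_nonneg (inv_nonneg.2 hc.le), inv_mul_le_iff₀ hc, mul_one, ← Finset.mul_sum,
    hvar, ← sub_div] using hscaled

lemma measureReal_two_mul_lt_runningMax_le
    (h : ∀ i, IsNonexpansiveStep μ (ℱ i) (ℱ (i + 1)) (V i) (d i) (σ i)) (hX : IsTwoSmooth X D)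
    (hD : 0 ≤ D) {p t : ℝ} (hp : 0 < p) (ht : 0 < t) (n : ℕ) :
    μ.real {ω | 2 * t < runningMax (drivenSeq V d) n ω ∧ (∀ i < n, 10 * p * ‖d i ω‖ ≤ t) ∧
        40 / 3 * D * √p * √(∑ i ∈ Finset.range n, σ i ω) ≤ t} ≤
      Real.exp (2 - 31 / 4 * p) * μ.real {ω | t < runningMax (drivenSeq V d) n ω} := by
  have hover := measureReal_overshoot_le h hX ht.le (le_mul_of_one_le_left ht.le one_le_two)
    (c := t / (10 * p)) (by positivity) (9 / 4 * p) n
  have hexp : 2 - (2 * t - t) / (t / (10 * p)) + 9 / 4 * p = 2 - 31 / 4 * p := by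
    field_simp
    ring
  rw [hexp] at hover
  refine (measureReal_mono ?_).trans hover
  rintro ω ⟨hmax, hjump, hvar⟩
  refine ⟨hmax, fun i hi => ?_, ?_⟩
  · rw [le_div_iff₀' (by positivity)]
    exact hjump i hi
  · have hσ : 0 ≤ ∑ i ∈ Finset.range n, σ i ω := Finset.sum_nonneg fun i _ => (h i).nonneg ω
    have hsq := pow_le_pow_left₀ (by positivity) hvar 2
    rw [mul_pow, mul_pow, mul_pow, Real.sq_sqrt hσ, Real.sq_sqrt hp.le] at hsq
    have hq : 9 / 4 * p * (t / (10 * p)) ^ 2 = 9 / 400 * t ^ 2 / p := by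
      field_simp
      norm_num
    rw [hq, le_div_iff₀ hp]
    linarith

end Window

section MomentBound

variable {Ω X : Type*} [NormedAddCommGroup X] [NormedSpace ℝ X] {m0 : MeasurableSpace Ω}
  {μ : Measure Ω} {ℱ : Filtration ℕ m0} {V : ℕ → Ω → X → X} {d : ℕ → Ω → X}
  {σ : ℕ → Ω → ℝ} {D p : ℝ} {n : ℕ} {dmax : Ω → ℝ}

lemma memLp_runningMax (h : ∀ i, IsNonexpansiveStep μ (ℱ i) (ℱ (i + 1)) (V i) (d i) (σ i))
    {q : ENNReal} (hdmax : MemLp dmax q μ) (hdle : ∀ i < n, ∀ ω, ‖d i ω‖ ≤ dmax ω) :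
    MemLp (runningMax (drivenSeq V d) n) q μ := by
  refine (hdmax.const_mul (n : ℝ)).mono
    ((stronglyMeasurable_runningMax (stronglyMeasurable_drivenSeq h) n).mono
      (ℱ.le n)).aestronglyMeasurable (.of_forall fun ω => ?_)
  rw [Real.norm_of_nonneg (runningMax_nonneg n)]
  refine (runningMax_le fun j hj => ?_).trans (Real.le_norm_self _)
  calc ‖drivenSeq V d j ω‖ ≤ ∑ i ∈ Finset.range j, ‖d i ω‖ :=
        norm_drivenSeq_le (fun i => (h i).norm_apply_le) j ω
    _ ≤ ∑ i ∈ Finset.range n, ‖d i ω‖ :=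
        Finset.sum_le_sum_of_subset_of_nonneg (Finset.range_mono hj) fun _ _ _ => norm_nonneg _
    _ ≤ ∑ _i ∈ Finset.range n, dmax ω :=
        Finset.sum_le_sum fun i hi => hdle i (Finset.mem_range.1 hi) ω
    _ = n * dmax ω := by simp

variable [CompleteSpace X] [IsFiniteMeasure μ]

lemma measure_two_mul_lt_runningMax_le
    (h : ∀ i, IsNonexpansiveStep μ (ℱ i) (ℱ (i + 1)) (V i) (d i) (σ i)) (hX : IsTwoSmooth X D)
    (hD : 0 ≤ D) (hp : 0 < p) (hdmax0 : 0 ≤ dmax) (hdle : ∀ i < n, ∀ ω, ‖d i ω‖ ≤ dmax ω)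
    {t : ℝ} (ht : 0 < t) :
    μ {ω | 2 * t < runningMax (drivenSeq V d) n ω} ≤
      ENNReal.ofReal (Real.exp (2 - 31 / 4 * p)) *
          μ {ω | t < runningMax (drivenSeq V d) n ω} +
        μ {ω | t < 10 * p * dmax ω +
          40 / 3 * D * √p * √(∑ i ∈ Finset.range n, σ i ω)} := by
  set E := {ω | 2 * t < runningMax (drivenSeq V d) n ω ∧ (∀ i < n, 10 * p * ‖d i ω‖ ≤ t) ∧
    40 / 3 * D * √p * √(∑ i ∈ Finset.range n, σ i ω) ≤ t}
  have hE : μ E ≤ ENNReal.ofReal (Real.exp (2 - 31 / 4 * p)) *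
      μ {ω | t < runningMax (drivenSeq V d) n ω} := by
    rw [← ofReal_measureReal (s := E), ← ofReal_measureReal, ← ENNReal.ofReal_mul (by positivity)]
    exact ENNReal.ofReal_le_ofReal (measureReal_two_mul_lt_runningMax_le h hX hD hp ht n)
  refine (measure_mono fun ω hω => ?_).trans
    ((measure_union_le E _).trans (add_le_add hE le_rfl))
  refine or_iff_not_imp_right.2 fun hsmall => ?_
  have hle : 10 * p * dmax ω + 40 / 3 * D * √p * √(∑ i ∈ Finset.range n, σ i ω) ≤ t :=
    not_lt.1 hsmall
  have hjump : 0 ≤ 10 * p * dmax ω := mul_nonneg (by positivity) (hdmax0 ω)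
  have hvar : 0 ≤ 40 / 3 * D * √p * √(∑ i ∈ Finset.range n, σ i ω) := by positivity
  refine ⟨hω, fun i hi => ?_, by linarith⟩
  calc 10 * p * ‖d i ω‖ ≤ 10 * p * dmax ω := by gcongr; exact hdle i hi ω
    _ ≤ t := by linarith

lemma eLpNorm_runningMax_le
    (h : ∀ i, IsNonexpansiveStep μ (ℱ i) (ℱ (i + 1)) (V i) (d i) (σ i)) (hX : IsTwoSmooth X D)
    (hD : 0 ≤ D) (hp : 1 ≤ p) (hdmax : MemLp dmax (ENNReal.ofReal p) μ) (hdmax0 : 0 ≤ dmax)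
    (hdle : ∀ i < n, ∀ ω, ‖d i ω‖ ≤ dmax ω) :
    eLpNorm (runningMax (drivenSeq V d) n) (ENNReal.ofReal p) μ ≤
      ENNReal.ofReal (30 * p) * eLpNorm dmax (ENNReal.ofReal p) μ +
        ENNReal.ofReal (40 * D * √p) *
          eLpNorm (fun ω => √(∑ i ∈ Finset.range n, σ i ω)) (ENNReal.ofReal p) μ := by
  have hp0 : 0 < p := zero_lt_one.trans_le hp
  set S : Ω → ℝ := fun ω => √(∑ i ∈ Finset.range n, σ i ω)
  have hS : AEStronglyMeasurable S μ := (Real.continuous_sqrt.comp_stronglyMeasurable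
    (Finset.stronglyMeasurable_fun_sum _ fun i _ =>
      (h i).stronglyMeasurable_bound.mono (ℱ.le i))).aestronglyMeasurable
  have hmax := memLp_runningMax h hdmax hdle
  have hε : ENNReal.ofReal (Real.exp (2 - 31 / 4 * p)) + ENNReal.ofReal 3⁻¹ ^ p ≤
      ENNReal.ofReal 2⁻¹ ^ p := by
    rw [ENNReal.ofReal_rpow_of_pos (by norm_num), ENNReal.ofReal_rpow_of_pos (by norm_num),
      ← ENNReal.ofReal_add (by positivity) (by positivity)]
    exact ENNReal.ofReal_le_ofReal (exp_add_inv_three_rpow_le hp)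
  calc eLpNorm (runningMax (drivenSeq V d) n) (ENNReal.ofReal p) μ
      ≤ ENNReal.ofReal 3 * eLpNorm ((10 * p) • dmax + (40 / 3 * D * √p) • S)
          (ENNReal.ofReal p) μ :=
        eLpNorm_le_of_goodLambda (fun ω => runningMax_nonneg n)
          (add_nonneg (smul_nonneg (by positivity) hdmax0)
            (smul_nonneg (by positivity) fun ω => Real.sqrt_nonneg _))
          hmax.aestronglyMeasurable.aemeasurable
          ((hdmax.aestronglyMeasurable.const_smul _).add (hS.const_smul _)).aemeasurable
          hp0 two_pos three_pos hε hmax.eLpNorm_ne_top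
          fun t ht => measure_two_mul_lt_runningMax_le h hX hD hp0 hdmax0 hdle ht
    _ ≤ ENNReal.ofReal 3 * (eLpNorm ((10 * p) • dmax) (ENNReal.ofReal p) μ +
          eLpNorm ((40 / 3 * D * √p) • S) (ENNReal.ofReal p) μ) := by
        gcongr
        exact eLpNorm_add_le (hdmax.aestronglyMeasurable.const_smul _) (hS.const_smul _)
          (ENNReal.one_le_ofReal.2 hp)
    _ = _ := by
        rw [eLpNorm_const_smul, eLpNorm_const_smul, Real.enorm_of_nonneg (by positivity),
          Real.enorm_of_nonneg (by positivity), mul_add, ← mul_assoc, ← mul_assoc,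
          ← ENNReal.ofReal_mul zero_le_three, ← ENNReal.ofReal_mul zero_le_three]
        ring_nf

lemma eLpNorm_iSup_norm_le {N : ℕ → Ω → X} (hN0 : N 0 = 0)
    (hN : ∀ j < n, ∀ ω, N (j + 1) ω = V j ω (N j ω) + d j ω)
    (h : ∀ i < n, IsNonexpansiveStep μ (ℱ i) (ℱ (i + 1)) (V i) (d i) (σ i))
    (hX : IsTwoSmooth X D) (hD : 0 ≤ D) (hp : 1 ≤ p) (hdmax : MemLp dmax (ENNReal.ofReal p) μ)
    (hdmax0 : 0 ≤ dmax) (hdle : ∀ i < n, ∀ ω, ‖d i ω‖ ≤ dmax ω) :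
    eLpNorm (fun ω => ⨆ j : Fin (n + 1), ‖N j ω‖) (ENNReal.ofReal p) μ ≤
      ENNReal.ofReal (30 * p) * eLpNorm dmax (ENNReal.ofReal p) μ +
        ENNReal.ofReal (40 * D * √p) *
          eLpNorm (fun ω => √(∑ i ∈ Finset.range n, σ i ω)) (ENNReal.ofReal p) μ := by
  set V' : ℕ → Ω → X → X := fun i => if i < n then V i else fun _ => id
  set d' : ℕ → Ω → X := fun i => if i < n then d i else 0
  set σ' : ℕ → Ω → ℝ := fun i => if i < n then σ i else 0
  have h' (i : ℕ) : IsNonexpansiveStep μ (ℱ i) (ℱ (i + 1)) (V' i) (d' i) (σ' i) := by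
    by_cases hi : i < n
    · simpa [V', d', σ', hi] using h i hi
    · simpa [V', d', σ', hi] using IsNonexpansiveStep.id_zero
  have hdle' : ∀ i < n, ∀ ω, ‖d' i ω‖ ≤ dmax ω := fun i hi ω => by
    simpa [d', hi] using hdle i hi ω
  have hN' : ∀ j ≤ n, N j = drivenSeq V' d' j := fun j hj => by
    induction j with
    | zero => exact hN0
    | succ j ih =>
      ext ω
      rw [hN j hj, drivenSeq_succ, ← ih (Nat.le_of_succ_le hj)]
      simp [V', d', Nat.lt_of_succ_le hj]
  have hσ' (ω : Ω) : ∑ i ∈ Finset.range n, σ' i ω = ∑ i ∈ Finset.range n, σ i ω :=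
    Finset.sum_congr rfl fun i hi => by simp [σ', Finset.mem_range.1 hi]
  have hmax := eLpNorm_runningMax_le h' hX hD hp hdmax hdmax0 hdle'
  simp only [hσ'] at hmax
  refine (eLpNorm_mono_real fun ω => ?_).trans hmax
  rw [Real.norm_of_nonneg (Real.iSup_nonneg fun _ => norm_nonneg _)]
  refine ciSup_le fun j => ?_
  have hj : (j : ℕ) ≤ n := Nat.le_of_lt_succ j.2
  rw [hN' j hj]
  exact norm_le_runningMax hj

end MomentBound

theorem pinelis_rosenthal_burkholder_general {Ω : Type*} {m0 : MeasurableSpace Ω}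
    {μ : Measure Ω} [IsFiniteMeasure μ] {X : Type*} [NormedAddCommGroup X] [NormedSpace ℝ X]
    [CompleteSpace X] {D : ℝ} (hD : 0 ≤ D) (hX : IsTwoSmooth X D) {p : ℝ} (hp : 2 ≤ p) {ℓ : ℕ}
    {ℱ : Filtration ℕ m0} {Mt M : ℕ → Ω → X} {V : ℕ → Ω → X → X}
    (hM_adapted : ∀ j ≤ ℓ, StronglyMeasurable[ℱ j] (M j))
    (hM_int : ∀ j ≤ ℓ, Integrable (M j) μ)
    (hM_mart : ∀ i < ℓ, μ[M (i + 1) | ℱ i] =ᵐ[μ] M i)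
    (hV_lip : ∀ i < ℓ, ∀ ω, LipschitzWith 1 (V i ω)) (hV_zero : ∀ i < ℓ, ∀ ω, V i ω 0 = 0)
    (hV_pred : ∀ i < ℓ, ∀ x, StronglyMeasurable[ℱ i] fun ω => V i ω x) (hMt0 : Mt 0 = 0)
    (hrec : ∀ i < ℓ, ∀ ω, Mt (i + 1) ω = V i ω (Mt i ω) + (M (i + 1) ω - M i ω)) :
    eLpNorm (fun ω => ⨆ j : Fin (ℓ + 1), ‖Mt j ω‖) (ENNReal.ofReal p) μ ≤
      ENNReal.ofReal (30 * p) *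
          eLpNorm (fun ω => ⨆ j : Fin ℓ, ‖M (j + 1) ω - M j ω‖) (ENNReal.ofReal p) μ +
        ENNReal.ofReal (40 * D * √p) *
          eLpNorm (fun ω => √(∑ i ∈ Finset.range ℓ,
            (μ[fun ω' => ‖M (i + 1) ω' - M i ω'‖ ^ 2 | ℱ i]) ω)) (ENNReal.ofReal p) μ := by
  set dmax : Ω → ℝ := fun ω => ⨆ j : Fin ℓ, ‖M (j + 1) ω - M j ω‖
  by_cases htop : eLpNorm dmax (ENNReal.ofReal p) μ = ⊤
  · rw [htop, ENNReal.mul_top (ENNReal.ofReal_pos.2 (by linarith)).ne', top_add]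
    exact le_top
  have hd (i : ℕ) (hi : i < ℓ) : StronglyMeasurable[ℱ (i + 1)] (M (i + 1) - M i) :=
    (hM_adapted (i + 1) hi).sub ((hM_adapted i hi.le).mono (ℱ.mono i.le_succ))
  have hdmax0 : 0 ≤ dmax := fun ω => Real.iSup_nonneg fun _ => norm_nonneg _
  have hdle (i : ℕ) (hi : i < ℓ) (ω : Ω) : ‖(M (i + 1) - M i) ω‖ ≤ dmax ω :=
    le_ciSup (f := fun j : Fin ℓ => ‖M (j + 1) ω - M j ω‖) (Set.finite_range _).bddAbove ⟨i, hi⟩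
  have hdmax : MemLp dmax (ENNReal.ofReal p) μ :=
    ⟨(Measurable.iSup fun j : Fin ℓ =>
      ((hd j j.2).mono (ℱ.le _)).norm.measurable).aestronglyMeasurable, lt_top_iff_ne_top.2 htop⟩
  have hstep (i : ℕ) (hi : i < ℓ) := IsNonexpansiveStep.of_condExp (hV_lip i hi) (hV_zero i hi)
    (hV_pred i hi) (hd i hi)
    ((hdmax.mono_exponent (ENNReal.ofReal_ofNat 2 ▸ ENNReal.ofReal_le_ofReal hp)).mono
      ((hd i hi).mono (ℱ.le _)).aestronglyMeasurable
      (.of_forall fun ω => (hdle i hi ω).trans (Real.le_norm_self _)))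
    (condExp_sub_ae_eq_zero (ℱ.le i) (hM_adapted i hi.le) (hM_int i hi.le)
      (hM_int (i + 1) hi) (hM_mart i hi))
  refine (eLpNorm_iSup_norm_le hMt0 hrec hstep hX hD (by linarith) hdmax hdmax0 hdle).trans_eq ?_
  congr 2
  exact eLpNorm_congr_ae
    ((sum_condExp_sup_zero_ae_eq (fun i ω => sq_nonneg ‖(M (i + 1) - M i) ω‖) ℓ).fun_comp
      Real.sqrt)

/-- Pinelis-type Rosenthal–Burkholder inequality for perturbed martingale recursions
in (2,D)-smooth Banach spaces (general case). -/
theorem pinelis_rosenthal_burkholder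
    {Ω : Type*} {m0 : MeasurableSpace Ω} {μ : Measure Ω} [IsProbabilityMeasure μ]
    {X : Type*} [NormedAddCommGroup X] [NormedSpace ℝ X] [CompleteSpace X]
    (D : ℝ) (hD : 1 ≤ D)
    (hsmooth : ∀ x y : X, ‖x + y‖^2 + ‖x - y‖^2 ≤ 2*‖x‖^2 + 2*D^2*‖y‖^2)
    (p : ℝ) (hp : 2 ≤ p)
    (ℓ : ℕ) (ℱ : Filtration ℕ m0)
    (Mt M : ℕ → Ω → X) (V : ℕ → Ω → X →L[ℝ] X)
    -- (M̃_j)_{j=0}^ℓ is adapted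
    (hMt_adapted : ∀ j ≤ ℓ, StronglyMeasurable[ℱ j] (Mt j))
    -- (M_j)_{j=0}^ℓ is a martingale with respect to (ℱ_j)
    (hM_adapted : ∀ j ≤ ℓ, StronglyMeasurable[ℱ j] (M j))
    (hM_int : ∀ j ≤ ℓ, Integrable (M j) μ)
    (hM_mart : ∀ i j, i ≤ j → j ≤ ℓ → μ[M j | ℱ i] =ᵐ[μ] M i)
    -- (V_j)_{j=1}^ℓ is a strongly predictable sequence of random contractions
    (hV_contr : ∀ j ω, ‖V j ω‖ ≤ 1)
    (hV_pred : ∀ j, 1 ≤ j → j ≤ ℓ → ∀ x : X,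
      StronglyMeasurable[ℱ (j-1)] (fun ω => V j ω x))
    -- initial values and the recursion M̃_j = V_j M̃_{j-1} + d_j
    (hMt0 : Mt 0 = 0) (hM0 : M 0 = 0)
    (hrec : ∀ j, 1 ≤ j → j ≤ ℓ → ∀ ω,
      Mt j ω = V j ω (Mt (j-1) ω) + (M j ω - M (j-1) ω)) :
    eLpNorm (fun ω => ⨆ j : Fin (ℓ+1), ‖Mt (j : ℕ) ω‖) (ENNReal.ofReal p) μ ≤
      ENNReal.ofReal (30*p) *
        eLpNorm (fun ω => ⨆ j : Fin ℓ, ‖M ((j : ℕ)+1) ω - M (j : ℕ) ω‖)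
          (ENNReal.ofReal p) μ
      + ENNReal.ofReal (40*D*Real.sqrt p) *
        eLpNorm (fun ω => Real.sqrt (∑ i ∈ Finset.range ℓ,
            (μ[fun ω' => ‖M (i+1) ω' - M i ω'‖^2 | ℱ i]) ω))
          (ENNReal.ofReal p) μ :=
  pinelis_rosenthal_burkholder_general (V := fun i ω => V (i + 1) ω)
    (zero_le_one.trans hD) hsmooth hp hM_adapted hM_int
    (fun i hi => hM_mart i (i + 1) i.le_succ hi)
    (fun i _ ω => (V (i + 1) ω).lipschitz.weaken (hV_contr (i + 1) ω))
    (fun i _ ω => map_zero (V (i + 1) ω)) (fun i hi => hV_pred (i + 1) i.succ_pos hi) hMt0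
    (fun i hi => hrec (i + 1) i.succ_pos hi)
end
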